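/- arXiv:2408.17109 — 2 statements merged into one kernel-verified Lean document; each statement's English description precedes it below -/
import Mathlib

section
/- Let f: D([0,T]; ℝ^d) → ℝ be pathwise Malliavin differentiable with derivative 𝔻f; assume that f and, for every t ∈ [0,T], the map ω ↦ 𝔻_t f(ω) are continuous with respect to the uniform norm, and that 𝔻f has left limits and is boundedness preserving. Then for every ω ∈ D([0,T]; ℝ^d) and every absolutely continuous path η with η_0 = 0, say η_t = ∫_0^t g_s ds with g ∈ L^1([0,T]; ℝ^d), the map t ↦ ⟨𝔻_t f(ω), g_t⟩ is Lebesgue integrable and lim_{ε→0} (f(ω + ε η) − f(ω))/ε = ∫_0^T ⟨𝔻_t f(ω), g_t⟩ dt. -/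
open MeasureTheory Filter Set

noncomputable section

/-- `ω : ℝ → ℝ^d` is càdlàg on `[0,T]`: right-continuous at every `t ∈ [0,T)` (within `[0,T]`)
and with left limits (within `[0,T]`) at every `t ∈ (0,T]`. -/
def CadlagOn (T : ℝ) {d : ℕ} (ω : ℝ → Fin d → ℝ) : Prop :=
  (∀ t ∈ Set.Ico (0 : ℝ) T, Tendsto ω (nhdsWithin t (Set.Ioc t T)) (nhds (ω t))) ∧
  (∀ t ∈ Set.Ioc (0 : ℝ) T, ∃ l : Fin d → ℝ, Tendsto ω (nhdsWithin t (Set.Ico 0 t)) (nhds l))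

/-- The bump path `e·1_{[t,T]}`. -/
def bump (T : ℝ) {d : ℕ} (t : ℝ) (e : Fin d → ℝ) : ℝ → Fin d → ℝ :=
  Set.indicator (Set.Icc t T) (fun _ => e)

/-- `f` is pathwise Malliavin differentiable on `D([0,T]; ℝ^d)` with derivative `Df`:
for every càdlàg `ω`, every `t ∈ [0,T]` and every `e ∈ ℝ^d`,
`(f(ω + ε e 1_{[t,T]}) − f(ω))/ε → ⟨Df ω t, e⟩` as `ε → 0`. -/
def HasPathwiseMalliavinDeriv (T : ℝ) {d : ℕ} (f : (ℝ → Fin d → ℝ) → ℝ)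
    (Df : (ℝ → Fin d → ℝ) → ℝ → Fin d → ℝ) : Prop :=
  ∀ ω : ℝ → Fin d → ℝ, CadlagOn T ω → ∀ t ∈ Set.Icc (0 : ℝ) T, ∀ e : Fin d → ℝ,
    Tendsto (fun ε : ℝ => (f (ω + ε • bump T t e) - f ω) / ε)
      (nhdsWithin 0 {(0 : ℝ)}ᶜ) (nhds (∑ i, Df ω t i * e i))

/-- Continuity of a real functional on càdlàg paths with respect to the uniform norm on `[0,T]`
(sequential formulation). -/
def UnifContOnCadlag (T : ℝ) {d : ℕ} (f : (ℝ → Fin d → ℝ) → ℝ) : Prop :=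
  ∀ (ω : ℝ → Fin d → ℝ) (ωs : ℕ → ℝ → Fin d → ℝ),
    CadlagOn T ω → (∀ n, CadlagOn T (ωs n)) →
    TendstoUniformlyOn ωs ω atTop (Set.Icc 0 T) →
    Tendsto (fun n => f (ωs n)) atTop (nhds (f ω))

/-- Continuity of an `ℝ^d`-valued functional on càdlàg paths with respect to the uniform norm
on `[0,T]` (sequential formulation). -/
def UnifContOnCadlagVec (T : ℝ) {d : ℕ} (F : (ℝ → Fin d → ℝ) → Fin d → ℝ) : Prop :=
  ∀ (ω : ℝ → Fin d → ℝ) (ωs : ℕ → ℝ → Fin d → ℝ),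
    CadlagOn T ω → (∀ n, CadlagOn T (ωs n)) →
    TendstoUniformlyOn ωs ω atTop (Set.Icc 0 T) →
    Tendsto (fun n => F (ωs n)) atTop (nhds (F ω))

/-- `F : [0,T] × D([0,T];ℝ^d) → ℝ^d` has left limits: whenever `ω^n → ω` uniformly on `[0,T]`
and `t^n ↑ t` with `t^n < t`, `F(t^n, ω^n)` converges to a limit depending only on `(t, ω)`. -/
def HasLeftLimits (T : ℝ) {d : ℕ} (F : (ℝ → Fin d → ℝ) → ℝ → Fin d → ℝ) : Prop :=
  ∀ ω : ℝ → Fin d → ℝ, CadlagOn T ω → ∀ t ∈ Set.Ioc (0 : ℝ) T, ∃ l : Fin d → ℝ,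
    ∀ (ωs : ℕ → ℝ → Fin d → ℝ) (ts : ℕ → ℝ),
      (∀ n, CadlagOn T (ωs n)) →
      TendstoUniformlyOn ωs ω atTop (Set.Icc 0 T) →
      (∀ n, ts n < t) → Monotone ts → Tendsto ts atTop (nhds t) →
      Tendsto (fun n => F (ωs n) (ts n)) atTop (nhds l)

/-- `F` is boundedness preserving: `sup_{t ∈ [0,T]} sup_{‖ω‖_∞ < K} |F(t, ω)| < ∞` for every
`K > 0`. -/
def BoundednessPreserving (T : ℝ) {d : ℕ} (F : (ℝ → Fin d → ℝ) → ℝ → Fin d → ℝ) : Prop :=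
  ∀ K : ℝ, 0 < K → ∃ M : ℝ,
    ∀ ω : ℝ → Fin d → ℝ, CadlagOn T ω → (∀ s ∈ Set.Icc (0 : ℝ) T, ‖ω s‖ < K) →
      ∀ t ∈ Set.Icc (0 : ℝ) T, ‖F ω t‖ ≤ M

end

/-!
The path `η` is a uniform limit of pure jump paths whose jumps are the increments of `η` over the
cells `(p, q]` of a partition, placed at `p`. The mean value theorem applied to these jumps one at a
time writes the increment of `f` along such a path as `∫ ⟨H_s, g_s⟩ ds`, where on `(p, q]` the step
function `H` equals `𝔻_p f` at a path near `ω`. Continuity of `f` lets the mesh be chosen so fine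
that replacing `ε η` by its jump path changes `f` by at most `ε²`.

As `ε → 0`, the times `p` approach `s` strictly from the left, so `H_s → 𝔻_{s-} f(ω)`. This left
limit differs from `𝔻_s f(ω)` only for countably many `s`, and `H` is bounded because `𝔻f` is
boundedness preserving, so dominated convergence concludes.
-/

open scoped Topology

section LeftLimits

lemma exists_strictMono_monotone_comp {α : Type*} [LinearOrder α] [TopologicalSpace α]
    [OrderClosedTopology α] {x : ℕ → α} {a : α} (hlt : ∀ n, x n < a)
    (hx : Tendsto x atTop (𝓝 a)) : ∃ φ : ℕ → ℕ, StrictMono φ ∧ Monotone (x ∘ φ) := by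
  obtain ⟨φ, hφ | hφ⟩ := exists_increasing_or_nonincreasing_subseq (· ≤ ·) x
  · exact ⟨φ, φ.strictMono, monotone_nat_of_le_succ fun n => hφ n (n + 1) n.lt_succ_self⟩
  · refine absurd (hlt (φ 0)) (not_lt.2 (le_of_tendsto (hx.comp φ.strictMono.tendsto_atTop) ?_))
    filter_upwards [eventually_gt_atTop 0] with n hn
    exact (not_le.1 (hφ 0 n hn)).le

variable {α E : Type*} [LinearOrder α] [DenselyOrdered α] [NoMinOrder α] [TopologicalSpace α]
  [OrderTopology α] [SecondCountableTopology α] {A : Set α}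

/- Near `t` both `φ` and its left limits are close to `l t`, so the points of this set are isolated
from the left within it. -/
lemma countable_setOf_le_dist_of_tendsto_left [PseudoMetricSpace E] {φ l : α → E}
    (h : ∀ t ∈ A, Tendsto φ (𝓝[<] t) (𝓝 (l t))) {δ : ℝ} (hδ : 0 < δ) :
    {t ∈ A | δ ≤ dist (φ t) (l t)}.Countable := by
  set B := {t ∈ A | δ ≤ dist (φ t) (l t)}
  refine (countable_setOfPred_isolated_left_within (s := B)).mono fun t ht =>
    mem_sep (s := B) ht ?_
  obtain ⟨u, hu, hut⟩ := (mem_nhdsLT_iff_exists_Ioo_subset (α := α)).1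
    (h t ht.1 (Metric.ball_mem_nhds (l t) (show 0 < δ / 2 by positivity)))
  refine empty_mem_iff_bot.1 ?_
  filter_upwards [self_mem_nhdsWithin,
    nhdsWithin_mono t inter_subset_right (Ioo_mem_nhdsLT hu)] with x hxB hxu
  have hφ : dist (φ x) (l t) < δ / 2 := hut hxu
  have hl : dist (l x) (l t) ≤ δ / 2 := by
    refine le_of_tendsto ((h x hxB.1.1).dist tendsto_const_nhds) ?_
    filter_upwards [Ioo_mem_nhdsLT hxu.1] with y hy
    exact (Metric.mem_ball.1 (hut ⟨hy.1, hy.2.trans hxu.2⟩)).le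
  have htri := dist_triangle_right (φ x) (l x) (l t)
  have hx : δ ≤ dist (φ x) (l x) := hxB.1.2
  linarith

lemma countable_ne_of_tendsto_left [MetricSpace E] {φ l : α → E}
    (h : ∀ t ∈ A, Tendsto φ (𝓝[<] t) (𝓝 (l t))) : {t ∈ A | φ t ≠ l t}.Countable := by
  refine (countable_iUnion fun n : ℕ =>
    countable_setOf_le_dist_of_tendsto_left h (Nat.one_div_pos_of_nat (n := n))).mono ?_
  rintro t ⟨htA, hne⟩
  obtain ⟨n, hn⟩ := exists_nat_one_div_lt (dist_pos.2 hne)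
  exact mem_iUnion.2 ⟨n, htA, hn.le⟩

end LeftLimits

section BilinearConvergence

variable {α ι E F G : Type*} [MeasurableSpace α] {μ : Measure α} [NormedAddCommGroup E]
  [NormedSpace ℝ E] [NormedAddCommGroup F] [NormedSpace ℝ F] [NormedAddCommGroup G]
  [NormedSpace ℝ G]

lemma integrable_and_tendsto_integral_bilin (B : E →L[ℝ] F →L[ℝ] G) {l : Filter ι} [l.NeBot]
    [l.IsCountablyGenerated] {H : ι → α → E} {h : α → E} {g : α → F} {M : ℝ}
    (hmeas : ∀ᶠ i in l, AEStronglyMeasurable (H i) μ) (hbound : ∀ᶠ i in l, ∀ᵐ a ∂μ, ‖H i a‖ ≤ M)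
    (hlim : ∀ᵐ a ∂μ, Tendsto (fun i => H i a) l (𝓝 (h a))) (hg : Integrable g μ) :
    Integrable (fun a => B (h a) (g a)) μ ∧
      Tendsto (fun i => ∫ a, B (H i a) (g a) ∂μ) l (𝓝 (∫ a, B (h a) (g a) ∂μ)) := by
  obtain ⟨u, hul, hu⟩ := exists_seq_forall_of_frequently (hmeas.and hbound).frequently
  have hlimu : ∀ᵐ a ∂μ, Tendsto (fun n => H (u n) a) atTop (𝓝 (h a)) :=
    hlim.mono fun a ha => ha.comp hul
  have hh : AEStronglyMeasurable h μ :=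
    aestronglyMeasurable_of_tendsto_ae atTop (fun n => (hu n).1) hlimu
  have hhM : ∀ᵐ a ∂μ, ‖h a‖ ≤ M := by
    filter_upwards [hlimu, ae_all_iff.2 fun n => (hu n).2] with a ha haM
    exact le_of_tendsto' ha.norm haM
  refine ⟨B.integrable_of_bilin_of_bdd_left M hh hhM hg,
    tendsto_integral_filter_of_dominated_convergence (fun a => ‖B‖ * M * ‖g a‖)
      (hmeas.mono fun i hi => B.aestronglyMeasurable_comp₂ hi hg.1) ?_ (hg.norm.const_mul _) ?_⟩
  · filter_upwards [hbound] with i hi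
    filter_upwards [hi] with a ha
    exact (B.le_opNorm₂ _ _).trans (by gcongr)
  · filter_upwards [hlim] with a ha
    exact (B.continuous₂.tendsto (h a, g a)).comp (ha.prodMk_nhds tendsto_const_nhds)

end BilinearConvergence

/-- A partition of `[a, b]` into the cells `(point k, point (k + 1)]` with `k < size`. The points
are indexed by all of `ℕ` and equal `b` from index `size` on. -/
structure IntervalPartition (a b : ℝ) where
  point : ℕ → ℝ
  size : ℕ
  monotone : Monotone point
  point_zero : point 0 = a
  point_of_size_le : ∀ k, size ≤ k → point k = b

namespace IntervalPartition

variable {a b : ℝ}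

lemma exists_mesh_le (hab : a ≤ b) {δ : ℝ} (hδ : 0 < δ) :
    ∃ P : IntervalPartition a b, ∀ k, P.point (k + 1) - P.point k ≤ δ := by
  obtain ⟨m, hm⟩ := Icc.addNSMul_eq_right hab hδ
  have hmono := Icc.monotone_addNSMul hab hδ.le
  exact ⟨⟨fun k => Icc.addNSMul hab δ k, m, fun i j hij => hmono hij, Icc.addNSMul_zero hab, hm⟩,
    fun k => (le_abs_self _).trans
      (Icc.abs_sub_addNSMul_le hab hδ.le k ⟨hmono k.le_succ, le_rfl⟩)⟩

lemma le (P : IntervalPartition a b) : a ≤ b :=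
  P.point_zero.ge.trans ((P.monotone P.size.zero_le).trans (P.point_of_size_le _ le_rfl).le)

variable (P : IntervalPartition a b)

lemma point_size : P.point P.size = b := P.point_of_size_le _ le_rfl

lemma point_mem (k : ℕ) : P.point k ∈ Icc a b := by
  refine ⟨P.point_zero.ge.trans (P.monotone k.zero_le), ?_⟩
  exact (P.monotone (le_max_left k P.size)).trans (P.point_of_size_le _ (le_max_right _ _)).le

lemma uIcc_point_subset (j k : ℕ) : uIcc (P.point j) (P.point k) ⊆ uIcc a b :=
  uIcc_of_le P.le ▸ uIcc_subset_Icc (P.point_mem j) (P.point_mem k)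

lemma exists_mem_Ioc {s : ℝ} (hs : s ∈ Ioc a b) :
    ∃ k < P.size, s ∈ Ioc (P.point k) (P.point (k + 1)) := by
  have hcover := P.monotone.biUnion_Ico_Ioc_map_succ 0 P.size
  rw [P.point_zero, P.point_size] at hcover
  obtain ⟨k, hk, hsk⟩ := mem_iUnion₂.1 (hcover.ge hs)
  exact ⟨k, hk.2, hsk⟩

variable {E : Type*} [NormedAddCommGroup E]

/-- The step function equal to `v k` on the `k`-th cell of the partition and `0` off `(a, b]`. -/
noncomputable def step (v : ℕ → E) (s : ℝ) : E :=
  ∑ k ∈ Finset.range P.size, (Ioc (P.point k) (P.point (k + 1))).indicator (fun _ => v k) s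

lemma stronglyMeasurable_step (v : ℕ → E) : StronglyMeasurable (P.step v) :=
  Finset.stronglyMeasurable_fun_sum _ fun _ _ =>
    stronglyMeasurable_const.indicator measurableSet_Ioc

lemma step_of_mem (v : ℕ → E) {k : ℕ} (hk : k < P.size) {s : ℝ}
    (hs : s ∈ Ioc (P.point k) (P.point (k + 1))) : P.step v s = v k := by
  refine (Finset.sum_eq_single_of_mem k (Finset.mem_range.2 hk) fun j _ hjk => ?_).trans
    (indicator_of_mem hs _)
  have hdisj := P.monotone.pairwise_disjoint_on_Ioc_succ hjk
  exact indicator_of_notMem (disjoint_right.1 hdisj hs) _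

variable [NormedSpace ℝ E] {F G : Type*} [NormedAddCommGroup F] [NormedSpace ℝ F]
  [NormedAddCommGroup G] [NormedSpace ℝ G]

lemma sum_bilin_integral [CompleteSpace F] [CompleteSpace G] (B : E →L[ℝ] F →L[ℝ] G)
    (v : ℕ → E) {g : ℝ → F} (hg : IntervalIntegrable g volume a b) :
    ∑ k ∈ Finset.range P.size, B (v k) (∫ s in P.point k..P.point (k + 1), g s)
      = ∫ s in a..b, B (P.step v s) (g s) := by
  have hgk (k : ℕ) : IntervalIntegrable g volume (P.point k) (P.point (k + 1)) :=
    hg.mono_set (P.uIcc_point_subset _ _)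
  have hcell {k : ℕ} (hk : k < P.size) :
      EqOn (fun s => B (v k) (g s)) (fun s => B (P.step v s) (g s))
        (uIoc (P.point k) (P.point (k + 1))) := fun s hs => by
    rw [uIoc_of_le (P.monotone k.le_succ)] at hs
    simp only [P.step_of_mem v hk hs]
  calc ∑ k ∈ Finset.range P.size, B (v k) (∫ s in P.point k..P.point (k + 1), g s)
      = ∑ k ∈ Finset.range P.size,
          ∫ s in P.point k..P.point (k + 1), B (P.step v s) (g s) := by
        refine Finset.sum_congr rfl fun k hk => ?_
        rw [← (B (v k)).intervalIntegral_comp_comm (hgk k)]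
        exact intervalIntegral.integral_congr_ae (.of_forall (hcell (Finset.mem_range.1 hk)))
    _ = ∫ s in a..b, B (P.step v s) (g s) := by
        rw [intervalIntegral.sum_integral_adjacent_intervals, P.point_zero, P.point_size]
        exact fun k hk => IntervalIntegrable.congr (hcell hk)
          ⟨(B (v k)).integrable_comp (hgk k).1, (B (v k)).integrable_comp (hgk k).2⟩

lemma sum_norm_integral_le {g : ℝ → F} (hg : IntervalIntegrable g volume a b)
    {n : ℕ} : ∑ k ∈ Finset.range n, ‖∫ s in P.point k..P.point (k + 1), g s‖
      ≤ ∫ s in a..b, ‖g s‖ := by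
  have hgP (j k : ℕ) : IntervalIntegrable (‖g ·‖) volume (P.point j) (P.point k) :=
    hg.norm.mono_set (P.uIcc_point_subset j k)
  calc ∑ k ∈ Finset.range n, ‖∫ s in P.point k..P.point (k + 1), g s‖
      ≤ ∑ k ∈ Finset.range n, ∫ s in P.point k..P.point (k + 1), ‖g s‖ :=
        Finset.sum_le_sum fun k _ =>
          intervalIntegral.norm_integral_le_integral_norm (P.monotone k.le_succ)
    _ = ∫ s in a..P.point n, ‖g s‖ := by
        rw [intervalIntegral.sum_integral_adjacent_intervals fun k _ => hgP k (k + 1), P.point_zero]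
    _ ≤ ∫ s in a..b, ‖g s‖ := by
        obtain ⟨ha, hb⟩ := P.point_mem n
        exact intervalIntegral.integral_mono_interval le_rfl ha hb
          (.of_forall fun s => norm_nonneg (g s)) hg.norm

end IntervalPartition

section CadlagFunctionals

variable {T : ℝ} {d : ℕ}

namespace CadlagOn

variable {ω η : ℝ → Fin d → ℝ}

lemma add (hω : CadlagOn T ω) (hη : CadlagOn T η) : CadlagOn T (ω + η) := by
  refine ⟨fun t ht => (hω.1 t ht).add (hη.1 t ht), fun t ht => ?_⟩
  obtain ⟨l, hl⟩ := hω.2 t ht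
  obtain ⟨m, hm⟩ := hη.2 t ht
  exact ⟨l + m, hl.add hm⟩

lemma const_smul (hω : CadlagOn T ω) (c : ℝ) : CadlagOn T (c • ω) := by
  refine ⟨fun t ht => (hω.1 t ht).const_smul c, fun t ht => ?_⟩
  obtain ⟨l, hl⟩ := hω.2 t ht
  exact ⟨c • l, hl.const_smul c⟩

lemma of_continuousOn (hη : ContinuousOn η (Icc 0 T)) : CadlagOn T η :=
  ⟨fun t ht => (hη t ⟨ht.1, ht.2.le⟩).tendsto.mono_left
      (nhdsWithin_mono _ fun _ hs => ⟨ht.1.trans hs.1.le, hs.2⟩),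
    fun t ht => ⟨η t, (hη t ⟨ht.1.le, ht.2⟩).tendsto.mono_left
      (nhdsWithin_mono _ fun _ hs => ⟨hs.1, hs.2.le.trans ht.2⟩)⟩⟩

lemma isBoundedUnder_norm (hω : CadlagOn T ω) {t : ℝ} (ht : t ∈ Icc 0 T) :
    IsBoundedUnder (· ≤ ·) (𝓝[Icc 0 T] t) (‖ω ·‖) := by
  have hleft : IsBoundedUnder (· ≤ ·) (𝓝[Ico 0 t] t) (‖ω ·‖) := by
    rcases ht.1.eq_or_lt with rfl | h
    · simp only [Ico_self, nhdsWithin_empty, IsBoundedUnder, map_bot, isBounded_bot]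
      exact ⟨0⟩
    · obtain ⟨l, hl⟩ := hω.2 t ⟨h, ht.2⟩
      exact hl.norm.isBoundedUnder_le
  have hright : IsBoundedUnder (· ≤ ·) (𝓝[Ioc t T] t) (‖ω ·‖) := by
    rcases ht.2.eq_or_lt with rfl | h
    · simp only [Ioc_self, nhdsWithin_empty, IsBoundedUnder, map_bot, isBounded_bot]
      exact ⟨0⟩
    · exact (hω.1 t ⟨ht.1, h⟩).norm.isBoundedUnder_le
  rw [← Ico_union_Icc_eq_Icc ht.1 ht.2, ← Ioc_insert_left ht.2, nhdsWithin_union,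
    nhdsWithin_insert, IsBoundedUnder, map_sup, map_sup, map_pure]
  exact isBounded_sup hleft (isBounded_sup ⟨‖ω t‖, eventually_pure.2 le_rfl⟩ hright)

lemma exists_norm_le (hω : CadlagOn T ω) : ∃ C, ∀ s ∈ Icc 0 T, ‖ω s‖ ≤ C := by
  suffices h : BddAbove ((‖ω ·‖) '' Icc 0 T) from h.imp fun C hC => forall_mem_image.1 hC
  refine isCompact_Icc.induction_on (p := fun A => BddAbove ((‖ω ·‖) '' A)) (by simp)
    (fun _ _ hAB hB => hB.mono (image_mono hAB))
    (fun _ _ hA hB => image_union _ _ _ ▸ hA.union hB) fun t ht => ?_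
  obtain ⟨C, hC⟩ := hω.isBoundedUnder_norm ht
  exact ⟨_, eventually_map.1 hC, C, forall_mem_image.2 fun _ hs => hs⟩

end CadlagOn

section Bump

lemma bump_of_mem {t s : ℝ} (h : s ∈ Icc t T) (e : Fin d → ℝ) : bump T t e s = e :=
  indicator_of_mem h _

lemma bump_of_lt {t s : ℝ} (h : s < t) (e : Fin d → ℝ) : bump T t e s = 0 :=
  indicator_of_notMem (fun h' => h.not_ge h'.1) _

lemma norm_bump_le (t : ℝ) (e : Fin d → ℝ) (s : ℝ) : ‖bump T t e s‖ ≤ ‖e‖ :=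
  norm_indicator_le_norm_self _ _

lemma cadlagOn_bump (t : ℝ) (e : Fin d → ℝ) : CadlagOn T (bump T t e) := by
  refine ⟨fun s hs => ?_, fun s hs => ?_⟩
  · rcases le_or_gt t s with h | h
    · rw [bump_of_mem ⟨h, hs.2.le⟩]
      refine tendsto_const_nhds.congr' ?_
      filter_upwards [self_mem_nhdsWithin] with x hx
      exact (bump_of_mem ⟨h.trans hx.1.le, hx.2⟩ e).symm
    · rw [bump_of_lt h]
      refine tendsto_const_nhds.congr' ?_
      filter_upwards [mem_nhdsWithin_of_mem_nhds (Iio_mem_nhds h)] with x hx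
      exact (bump_of_lt hx e).symm
  · rcases lt_or_ge t s with h | h
    · refine ⟨e, tendsto_const_nhds.congr' ?_⟩
      filter_upwards [mem_nhdsWithin_of_mem_nhds (Ioi_mem_nhds h), self_mem_nhdsWithin]
        with x hx hx'
      exact (bump_of_mem ⟨le_of_lt hx, hx'.2.le.trans hs.2⟩ e).symm
    · refine ⟨0, tendsto_const_nhds.congr' ?_⟩
      filter_upwards [self_mem_nhdsWithin] with x hx
      exact (bump_of_lt (hx.2.trans_le h) e).symm

lemma cadlagOn_sum_bump (t : ℕ → ℝ) (e : ℕ → Fin d → ℝ) (n : ℕ) :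
    CadlagOn T (∑ k ∈ Finset.range n, bump T (t k) (e k)) := by
  induction n with
  | zero => exact .of_continuousOn continuousOn_const
  | succ n ih =>
    rw [Finset.sum_range_succ]
    exact ih.add (cadlagOn_bump _ _)

lemma norm_sum_bump_le (t : ℕ → ℝ) (e : ℕ → Fin d → ℝ) (n : ℕ) (s : ℝ) :
    ‖(∑ k ∈ Finset.range n, bump T (t k) (e k)) s‖ ≤ ∑ k ∈ Finset.range n, ‖e k‖ := by
  rw [Finset.sum_apply]
  exact norm_sum_le_of_le _ fun k _ => norm_bump_le _ _ _

lemma exists_sum_bump_eq {p : ℕ → ℝ} (hp : Monotone p) (u : ℕ → Fin d → ℝ) {s : ℝ} (hs : s ≤ T)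
    (n : ℕ) : ∃ m ≤ n, (∀ j < m, p j ≤ s) ∧ (m < n → s < p m) ∧
      (∑ k ∈ Finset.range n, bump T (p k) (u (k + 1) - u k)) s = u m - u 0 := by
  induction n with
  | zero => exact ⟨0, le_rfl, by simp⟩
  | succ n ih =>
    obtain ⟨m, hmn, hlow, hup, hsum⟩ := ih
    simp only [Finset.sum_range_succ, Pi.add_apply, hsum]
    rcases lt_or_ge s (p n) with hsn | hns
    · refine ⟨m, hmn.trans n.le_succ, hlow, fun _ => ?_, by rw [bump_of_lt hsn, add_zero]⟩
      exact hmn.lt_or_eq.elim hup fun h => h ▸ hsn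
    · obtain rfl : m = n := hmn.eq_of_not_lt fun h => ((hup h).trans_le (hp hmn)).not_ge hns
      exact ⟨m + 1, le_rfl, fun j hj => (hp (Nat.le_of_lt_succ hj)).trans hns,
        fun h => absurd h (lt_irrefl _), by rw [bump_of_mem ⟨hns, hs⟩]; abel⟩

end Bump

namespace IntervalPartition

/-- The pure jump path on `[0, T]` whose jump at `P.point k` is the increment of `η` over the `k`-th
cell. Each increment is anticipated to the left end of its cell, so the path is càdlàg. -/
noncomputable def stepPath (P : IntervalPartition 0 T) (η : ℝ → Fin d → ℝ) : ℝ → Fin d → ℝ :=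
  ∑ k ∈ Finset.range P.size, bump T (P.point k) (η (P.point (k + 1)) - η (P.point k))

lemma exists_stepPath_eq (P : IntervalPartition 0 T) {δ : ℝ}
    (hP : ∀ k, P.point (k + 1) - P.point k ≤ δ) (η : ℝ → Fin d → ℝ) {s : ℝ} (hs : s ∈ Icc 0 T) :
    ∃ k, |P.point k - s| ≤ δ ∧ P.stepPath η s = η (P.point k) - η 0 := by
  obtain ⟨m, hm, hlow, hup, hsum⟩ :=
    exists_sum_bump_eq P.monotone (fun k => η (P.point k)) hs.2 P.size
  refine ⟨m, ?_, by rw [stepPath, hsum, P.point_zero]⟩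
  have hge : s ≤ P.point m := by
    rcases hm.lt_or_eq with h | rfl
    · exact (hup h).le
    · exact hs.2.trans_eq P.point_size.symm
  have hle : P.point m ≤ s + δ := by
    rcases m with _ | j
    · linarith [P.point_zero, hs.1, hP 0, P.monotone (Nat.le_succ 0)]
    · linarith [hP j, hlow j j.lt_succ_self]
  rw [abs_of_nonneg (sub_nonneg.2 hge)]
  linarith

lemma tendstoUniformlyOn_stepPath {ι : Type*} {l : Filter ι} {P : ι → IntervalPartition 0 T}
    {δ : ι → ℝ} (hδ : Tendsto δ l (𝓝 0)) (hP : ∀ i k, (P i).point (k + 1) - (P i).point k ≤ δ i)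
    {η : ℝ → Fin d → ℝ} (hη : ContinuousOn η (Icc 0 T)) :
    TendstoUniformlyOn (fun i => (P i).stepPath η) (fun s => η s - η 0) l (Icc 0 T) := by
  rw [Metric.tendstoUniformlyOn_iff]
  intro r hr
  obtain ⟨c, hc, hηc⟩ := Metric.uniformContinuousOn_iff.1
    (isCompact_Icc.uniformContinuousOn_of_continuous hη) r hr
  filter_upwards [hδ.eventually_lt_const hc] with i hi s hs
  obtain ⟨k, hks, hk⟩ := (P i).exists_stepPath_eq (hP i) η hs
  rw [hk, dist_sub_right]
  refine hηc s hs _ ((P i).point_mem k) ?_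
  rw [dist_comm, Real.dist_eq]
  exact hks.trans_lt hi

end IntervalPartition

lemma UnifContOnCadlag.exists_partition {f : (ℝ → Fin d → ℝ) → ℝ} (hf : UnifContOnCadlag T f)
    (hT : 0 ≤ T) {ω η : ℝ → Fin d → ℝ} (hω : CadlagOn T ω) (hη : ContinuousOn η (Icc 0 T))
    (hη0 : η 0 = 0) {δ r : ℝ} (hδ : 0 < δ) (hr : 0 < r) :
    ∃ P : IntervalPartition 0 T, (∀ k, P.point (k + 1) - P.point k ≤ δ) ∧
      |f (ω + P.stepPath η) - f (ω + η)| < r := by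
  choose P hP using fun n : ℕ =>
    IntervalPartition.exists_mesh_le hT (Nat.one_div_pos_of_nat (α := ℝ) (n := n))
  have hmesh := tendsto_one_div_add_atTop_nhds_zero_nat (𝕜 := ℝ)
  have hunif : TendstoUniformlyOn (fun n => (P n).stepPath η) η atTop (Icc 0 T) := by
    simpa only [hη0, sub_zero] using IntervalPartition.tendstoUniformlyOn_stepPath hmesh hP hη
  have hunif' : TendstoUniformlyOn (fun n => ω + (P n).stepPath η) (ω + η) atTop (Icc 0 T) := by
    rw [Metric.tendstoUniformlyOn_iff] at hunif ⊢
    simpa only [Pi.add_apply, dist_add_left] using hunif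
  have hlim := hf _ _ (hω.add (.of_continuousOn hη))
    (fun n => hω.add (cadlagOn_sum_bump _ _ (P n).size)) hunif'
  obtain ⟨n, hn, hnδ⟩ := ((Metric.tendsto_nhds.1 hlim r hr).and
    (hmesh.eventually_lt_const hδ)).exists
  exact ⟨P n, fun k => (hP n k).trans hnδ.le, hn⟩

/-- A one-sided neighbourhood of `(ω, s)`, as it occurs in the left-limit property: pairs of a
càdlàg path within uniform distance `r` of `ω` on `[0, T]` and a time in `[s - r, s)`. -/
def leftBall (T r : ℝ) (ω : ℝ → Fin d → ℝ) (s : ℝ) : Set ((ℝ → Fin d → ℝ) × ℝ) :=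
  {p | CadlagOn T p.1 ∧ (∀ x ∈ Icc 0 T, ‖p.1 x - ω x‖ ≤ r) ∧ 0 ≤ p.2 ∧ p.2 ∈ Ico (s - r) s}

lemma leftBall_mono {r r' : ℝ} (h : r ≤ r') (ω : ℝ → Fin d → ℝ) (s : ℝ) :
    leftBall T r ω s ⊆ leftBall T r' ω s := fun _ ⟨hcad, hnorm, h0, htime⟩ =>
  ⟨hcad, fun x hx => (hnorm x hx).trans h, h0, Ico_subset_Ico_left (sub_le_sub_left h s) htime⟩

section LeftLimitFunctional

variable {F : (ℝ → Fin d → ℝ) → ℝ → Fin d → ℝ} {ω : ℝ → Fin d → ℝ}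

lemma HasLeftLimits.exists_leftBall (hF : HasLeftLimits T F) (hω : CadlagOn T ω) {t : ℝ}
    (ht : t ∈ Ioc 0 T) : ∃ l, ∀ δ > 0, ∃ r > 0, ∀ p ∈ leftBall T r ω t,
      dist (Function.uncurry F p) l < δ := by
  obtain ⟨l, hl⟩ := hF ω hω t ht
  refine ⟨l, fun δ hδ => ?_⟩
  by_contra! hfar
  choose p hp hpδ using fun n : ℕ => hfar (1 / (n + 1)) Nat.one_div_pos_of_nat
  have hr := tendsto_one_div_add_atTop_nhds_zero_nat (𝕜 := ℝ)
  have hpath : TendstoUniformlyOn (fun n => (p n).1) ω atTop (Icc 0 T) := by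
    refine Metric.tendstoUniformlyOn_iff.2 fun ε hε => ?_
    filter_upwards [hr.eventually_lt_const hε] with n hn x hx
    rw [dist_comm, dist_eq_norm]
    exact ((hp n).2.1 x hx).trans_lt hn
  have htime : Tendsto (fun n => (p n).2) atTop (𝓝 t) :=
    tendsto_of_tendsto_of_tendsto_of_le_of_le (by simpa only [sub_zero] using hr.const_sub t)
      tendsto_const_nhds (fun n => (hp n).2.2.2.1) fun n => (hp n).2.2.2.2.le
  obtain ⟨φ, hφ, hmono⟩ := exists_strictMono_monotone_comp (fun n => (hp n).2.2.2.2) htime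
  have hlim := hl (fun n => (p (φ n)).1) (fun n => (p (φ n)).2) (fun n => (hp _).1)
    (fun u hu => hφ.tendsto_atTop.eventually (hpath u hu)) (fun n => (hp _).2.2.2.2) hmono
    (htime.comp hφ.tendsto_atTop)
  obtain ⟨n, hn⟩ := (Metric.tendsto_nhds.1 hlim δ hδ).exists
  exact (hpδ (φ n)).not_gt hn

lemma HasLeftLimits.ae_tendsto (hF : HasLeftLimits T F) (hω : CadlagOn T ω) {ι : Type*}
    {l : Filter ι} {c : ι → ℝ} (hc : Tendsto c l (𝓝 0)) {H : ι → ℝ → Fin d → ℝ}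
    (hH : ∀ᶠ i in l, ∀ s ∈ Ioc 0 T, H i s ∈ Function.uncurry F '' leftBall T (c i) ω s) :
    ∀ᵐ s ∂volume.restrict (Ioc 0 T), Tendsto (fun i => H i s) l (𝓝 (F ω s)) := by
  choose! L hL using fun t (ht : t ∈ Ioc 0 T) => hF.exists_leftBall hω ht
  have hHL : ∀ s ∈ Ioc 0 T, Tendsto (fun i => H i s) l (𝓝 (L s)) := fun s hs => by
    refine Metric.tendsto_nhds.2 fun δ hδ => ?_
    obtain ⟨r, hr, hball⟩ := hL s hs δ hδ
    filter_upwards [hH, hc.eventually_le_const hr] with i hi hir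
    obtain ⟨p, hp, hpH⟩ := hi s hs
    exact hpH ▸ hball p (leftBall_mono hir ω s hp)
  have hFL : ∀ s ∈ Ioc 0 T, Tendsto (F ω) (𝓝[<] s) (𝓝 (L s)) := fun s hs => by
    refine Metric.tendsto_nhds.2 fun δ hδ => ?_
    obtain ⟨r, hr, hball⟩ := hL s hs δ hδ
    filter_upwards [Ioo_mem_nhdsLT hs.1, Ioo_mem_nhdsLT (sub_lt_self s hr)] with x hx0 hxr
    exact hball (ω, x) ⟨hω, fun y _ => by simpa using hr.le, hx0.1.le, hxr.1.le, hxr.2⟩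
  filter_upwards [ae_restrict_mem measurableSet_Ioc,
    (countable_ne_of_tendsto_left hFL).ae_notMem (volume.restrict (Ioc 0 T))] with s hs hsF
  have hFs : F ω s = L s := not_not.1 fun hne => hsF ⟨hs, hne⟩
  exact hFs ▸ hHL s hs

lemma BoundednessPreserving.exists_norm_le_leftBall (hF : BoundednessPreserving T F)
    (hω : CadlagOn T ω) :
    ∃ M, ∀ s ≤ T, ∀ p ∈ leftBall T 1 ω s, ‖Function.uncurry F p‖ ≤ M := by
  obtain ⟨C, hC⟩ := hω.exists_norm_le
  obtain ⟨M, hM⟩ := hF (|C| + 2) (by positivity)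
  refine ⟨M, fun s hs p ⟨hcad, hnorm, h0, htime⟩ => hM p.1 hcad (fun x hx => ?_) p.2
    ⟨h0, htime.2.le.trans hs⟩⟩
  linarith [norm_le_norm_add_norm_sub' (p.1 x) (ω x), hC x hx, hnorm x hx, le_abs_self C]

lemma HasLeftLimits.integrableOn_and_tendsto_integral (hll : HasLeftLimits T F)
    (hbp : BoundednessPreserving T F) (hω : CadlagOn T ω) {g : ℝ → Fin d → ℝ}
    (hg : IntegrableOn g (Ioc 0 T)) {ι : Type*} {l : Filter ι} [l.NeBot] [l.IsCountablyGenerated]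
    {c : ι → ℝ} (hc : Tendsto c l (𝓝 0)) {H : ι → ℝ → Fin d → ℝ}
    (hmeas : ∀ᶠ i in l, StronglyMeasurable (H i))
    (hH : ∀ᶠ i in l, ∀ s ∈ Ioc 0 T, H i s ∈ Function.uncurry F '' leftBall T (c i) ω s) :
    IntegrableOn (fun s => F ω s ⬝ᵥ g s) (Ioc 0 T) ∧
      Tendsto (fun i => ∫ s in Ioc 0 T, H i s ⬝ᵥ g s) l (𝓝 (∫ s in Ioc 0 T, F ω s ⬝ᵥ g s)) := by
  obtain ⟨M, hM⟩ := hbp.exists_norm_le_leftBall hω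
  have hbound : ∀ᶠ i in l, ∀ᵐ s ∂volume.restrict (Ioc 0 T), ‖H i s‖ ≤ M := by
    filter_upwards [hH, hc.eventually_le_const zero_lt_one] with i hi hic
    filter_upwards [ae_restrict_mem measurableSet_Ioc] with s hs
    obtain ⟨p, hp, hpH⟩ := hi s hs
    exact hpH ▸ hM s hs.2 p (leftBall_mono hic ω s hp)
  exact integrable_and_tendsto_integral_bilin (dotProductBilin ℝ ℝ).toContinuousBilinearMap
    (hmeas.mono fun i hi => hi.aestronglyMeasurable) hbound (hll.ae_tendsto hω hc hH) hg

end LeftLimitFunctional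

section Primitive

variable {E : Type*} [NormedAddCommGroup E] [NormedSpace ℝ E]

/-- The path `t ↦ ∫_0^t g_s ds`; a set integral over `(0, t]`, so it vanishes for `t ≤ 0`. -/
noncomputable def primitive (g : ℝ → E) (t : ℝ) : E := ∫ s in Ioc 0 t, g s

lemma primitive_zero (g : ℝ → E) : primitive g 0 = 0 := by simp [primitive]

lemma primitive_const_smul (c : ℝ) (g : ℝ → E) : primitive (c • g) = c • primitive g :=
  funext fun _ => integral_smul c g

lemma continuousOn_primitive {g : ℝ → E} (hg : IntegrableOn g (Icc 0 T)) :
    ContinuousOn (primitive g) (Icc 0 T) :=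
  intervalIntegral.continuousOn_primitive hg

lemma primitive_sub_primitive {g : ℝ → E} (hg : IntegrableOn g (Icc 0 T)) {s t : ℝ}
    (hs : s ∈ Icc 0 T) (ht : t ∈ Icc 0 T) :
    primitive g t - primitive g s = ∫ x in s..t, g x := by
  have hint {x : ℝ} (hx : x ∈ Icc 0 T) : IntervalIntegrable g volume 0 x :=
    (intervalIntegrable_iff_integrableOn_Icc_of_le hx.1).2
      (hg.mono_set (Icc_subset_Icc_right hx.2))
  rw [primitive, primitive, ← intervalIntegral.integral_of_le hs.1,
    ← intervalIntegral.integral_of_le ht.1]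
  exact intervalIntegral.integral_interval_sub_left (hint ht) (hint hs)

end Primitive

namespace HasPathwiseMalliavinDeriv

variable {f : (ℝ → Fin d → ℝ) → ℝ} {Df : (ℝ → Fin d → ℝ) → ℝ → Fin d → ℝ}
  {ω : ℝ → Fin d → ℝ}

lemma hasDerivAt (h : HasPathwiseMalliavinDeriv T f Df) (hω : CadlagOn T ω) {t : ℝ}
    (ht : t ∈ Icc 0 T) (e : Fin d → ℝ) (x : ℝ) :
    HasDerivAt (fun x : ℝ => f (ω + x • bump T t e)) (Df (ω + x • bump T t e) t ⬝ᵥ e) x := by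
  rw [hasDerivAt_iff_tendsto_slope_zero]
  refine (h _ (hω.add ((cadlagOn_bump t e).const_smul x)) t ht e).congr fun ε => ?_
  rw [add_smul, ← add_assoc, smul_eq_mul, div_eq_inv_mul]

lemma exists_sub_eq (h : HasPathwiseMalliavinDeriv T f Df) (hω : CadlagOn T ω) {t : ℝ}
    (ht : t ∈ Icc 0 T) (e : Fin d → ℝ) :
    ∃ θ ∈ Ioo (0 : ℝ) 1,
      f (ω + bump T t e) - f ω = Df (ω + θ • bump T t e) t ⬝ᵥ e := by
  obtain ⟨θ, hθ, hslope⟩ := exists_hasDerivAt_eq_slope _ _ (zero_lt_one' ℝ)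
    (fun x _ => (h.hasDerivAt hω ht e x).continuousAt.continuousWithinAt)
    fun x _ => h.hasDerivAt hω ht e x
  refine ⟨θ, hθ, ?_⟩
  simpa only [one_smul, zero_smul, add_zero, sub_zero, div_one] using hslope.symm

lemma exists_sub_eq_sum (h : HasPathwiseMalliavinDeriv T f Df) (hω : CadlagOn T ω) {τ : ℕ → ℝ}
    (hτ : ∀ k, τ k ∈ Icc 0 T) (a : ℕ → Fin d → ℝ) :
    ∃ ρ : ℕ → ℝ → Fin d → ℝ, (∀ k, CadlagOn T (ρ k)) ∧
      (∀ k s, ‖ρ k s - ω s‖ ≤ ∑ j ∈ Finset.range (k + 1), ‖a j‖) ∧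
      ∀ N, f (ω + ∑ j ∈ Finset.range N, bump T (τ j) (a j)) - f ω
        = ∑ k ∈ Finset.range N, Df (ρ k) (τ k) ⬝ᵥ a k := by
  set S : ℕ → ℝ → Fin d → ℝ := fun k => ∑ j ∈ Finset.range k, bump T (τ j) (a j)
  have hS0 : S 0 = 0 := Finset.sum_range_zero _
  have hSsucc (k : ℕ) : S (k + 1) = S k + bump T (τ k) (a k) := Finset.sum_range_succ _ k
  have hωS (k : ℕ) : CadlagOn T (ω + S k) := hω.add (cadlagOn_sum_bump τ a k)
  choose θ hθ hjump using fun k => h.exists_sub_eq (hωS k) (hτ k) (a k)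
  refine ⟨fun k => ω + S k + θ k • bump T (τ k) (a k),
    fun k => (hωS k).add ((cadlagOn_bump _ _).const_smul _), fun k s => ?_, fun N => ?_⟩
  · have hθk : ‖θ k • bump T (τ k) (a k) s‖ ≤ ‖a k‖ := by
      rw [norm_smul, Real.norm_of_nonneg (hθ k).1.le]
      exact (mul_le_of_le_one_left (norm_nonneg _) (hθ k).2.le).trans (norm_bump_le _ _ _)
    simp only [Pi.add_apply, Pi.smul_apply, add_assoc, add_sub_cancel_left, Finset.sum_range_succ]
    exact norm_add_le_of_le (norm_sum_bump_le τ a k s) hθk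
  · calc f (ω + S N) - f ω = f (ω + S N) - f (ω + S 0) := by rw [hS0, add_zero]
      _ = ∑ k ∈ Finset.range N, (f (ω + S (k + 1)) - f (ω + S k)) :=
          (Finset.sum_range_sub (fun k => f (ω + S k)) N).symm
      _ = ∑ k ∈ Finset.range N, Df (ω + S k + θ k • bump T (τ k) (a k)) (τ k) ⬝ᵥ a k :=
          Finset.sum_congr rfl fun k _ => by rw [← hjump k, add_assoc, hSsucc]

lemma exists_abs_sub_integral_lt (h : HasPathwiseMalliavinDeriv T f Df)
    (hf : UnifContOnCadlag T f) (hT : 0 ≤ T) (hω : CadlagOn T ω) {g : ℝ → Fin d → ℝ}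
    (hg : IntegrableOn g (Icc 0 T)) {c r : ℝ} (hc : 0 < c) (hgc : ∫ s in 0..T, ‖g s‖ ≤ c)
    (hr : 0 < r) :
    ∃ H : ℝ → Fin d → ℝ, StronglyMeasurable H ∧
      (∀ s ∈ Ioc 0 T, H s ∈ Function.uncurry Df '' leftBall T c ω s) ∧
      |f (ω + primitive g) - f ω - ∫ s in 0..T, H s ⬝ᵥ g s| < r := by
  obtain ⟨P, hmesh, hPr⟩ := hf.exists_partition hT hω (continuousOn_primitive hg)
    (primitive_zero g) hc hr
  have hgT : IntervalIntegrable g volume 0 T :=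
    (intervalIntegrable_iff_integrableOn_Icc_of_le hT).2 hg
  obtain ⟨ρ, hρ, hρω, hsum⟩ := h.exists_sub_eq_sum hω P.point_mem
    fun k => ∫ s in P.point k..P.point (k + 1), g s
  have hstep : f (ω + P.stepPath (primitive g)) - f ω
      = ∫ s in 0..T, P.step (fun k => Df (ρ k) (P.point k)) s ⬝ᵥ g s := by
    simp only [IntervalPartition.stepPath,
      primitive_sub_primitive hg (P.point_mem _) (P.point_mem _), hsum P.size]
    exact P.sum_bilin_integral (dotProductBilin ℝ ℝ).toContinuousBilinearMap _ hgT
  refine ⟨P.step fun k => Df (ρ k) (P.point k), P.stronglyMeasurable_step _, fun s hs => ?_, ?_⟩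
  · obtain ⟨k, hk, hsk⟩ := P.exists_mem_Ioc hs
    refine ⟨(ρ k, P.point k), ⟨hρ k, fun x _ => ?_, (P.point_mem k).1, ?_, hsk.1⟩,
      (P.step_of_mem (fun k => Df (ρ k) (P.point k)) hk hsk).symm⟩
    · exact (hρω k x).trans ((P.sum_norm_integral_le hgT).trans hgc)
    · linarith [hsk.2, hmesh k]
  · rwa [← hstep, sub_sub_sub_cancel_right, abs_sub_comm]

lemma exists_abs_slope_sub_integral_lt (h : HasPathwiseMalliavinDeriv T f Df)
    (hf : UnifContOnCadlag T f) (hT : 0 ≤ T) (hω : CadlagOn T ω) {g : ℝ → Fin d → ℝ}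
    (hg : IntegrableOn g (Icc 0 T)) {ε : ℝ} (hε : ε ≠ 0) :
    ∃ H : ℝ → Fin d → ℝ, StronglyMeasurable H ∧
      (∀ s ∈ Ioc 0 T, H s ∈ Function.uncurry Df ''
        leftBall T (|ε| * ((∫ s in 0..T, ‖g s‖) + 1)) ω s) ∧
      |(f (ω + ε • primitive g) - f ω) / ε - ∫ s in 0..T, H s ⬝ᵥ g s| < |ε| := by
  have hε' : 0 < |ε| := abs_pos.2 hε
  have hI : 0 ≤ ∫ s in 0..T, ‖g s‖ :=
    intervalIntegral.integral_nonneg hT fun s _ => norm_nonneg (g s)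
  have hεg : ∫ s in 0..T, ‖(ε • g) s‖ ≤ |ε| * ((∫ s in 0..T, ‖g s‖) + 1) := by
    simp only [Pi.smul_apply, norm_smul, intervalIntegral.integral_const_mul, Real.norm_eq_abs]
    exact mul_le_mul_of_nonneg_left (le_add_of_nonneg_right zero_le_one) hε'.le
  obtain ⟨H, hmeas, hmem, hH⟩ := h.exists_abs_sub_integral_lt hf hT hω (hg.smul ε)
    (by positivity) hεg (mul_pos hε' hε')
  refine ⟨H, hmeas, hmem, ?_⟩
  simp only [primitive_const_smul, Pi.smul_apply, dotProduct_smul, smul_eq_mul,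
    intervalIntegral.integral_const_mul] at hH
  rwa [div_sub' hε, abs_div, div_lt_iff₀ hε']

end HasPathwiseMalliavinDeriv

end CadlagFunctionals

theorem statement_4_general (T : ℝ) (hT : 0 ≤ T) {d : ℕ}
    (f : (ℝ → Fin d → ℝ) → ℝ) (Df : (ℝ → Fin d → ℝ) → ℝ → Fin d → ℝ)
    (hdiff : HasPathwiseMalliavinDeriv T f Df) (hfcont : UnifContOnCadlag T f)
    (hll : HasLeftLimits T Df) (hbp : BoundednessPreserving T Df)
    (ω : ℝ → Fin d → ℝ) (hω : CadlagOn T ω)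
    (g : ℝ → Fin d → ℝ) (hg : IntegrableOn g (Icc 0 T)) :
    IntegrableOn (fun t => ∑ i, Df ω t i * g t i) (Icc 0 T) ∧
    Tendsto (fun ε : ℝ => (f (ω + ε • fun t => ∫ s in Ioc (0 : ℝ) t, g s) - f ω) / ε)
      (𝓝[≠] 0) (𝓝 (∫ t in Icc (0 : ℝ) T, ∑ i, Df ω t i * g t i)) := by
  choose! H hmeas hmem hslope using fun (ε : ℝ) (hε : ε ≠ 0) =>
    hdiff.exists_abs_slope_sub_integral_lt hfcont hT hω hg hε
  have hε : Tendsto (fun ε : ℝ => |ε|) (𝓝[≠] 0) (𝓝 0) :=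
    (continuous_abs.tendsto' 0 0 abs_zero).mono_left nhdsWithin_le_nhds
  have hradius : Tendsto (fun ε : ℝ => |ε| * ((∫ s in 0..T, ‖g s‖) + 1)) (𝓝[≠] 0) (𝓝 0) := by
    simpa only [zero_mul] using hε.mul_const ((∫ s in 0..T, ‖g s‖) + 1)
  have hne : ∀ᶠ ε : ℝ in 𝓝[≠] 0, ε ≠ 0 := self_mem_nhdsWithin
  obtain ⟨hint, hlim⟩ := hll.integrableOn_and_tendsto_integral hbp hω
    (hg.mono_set Ioc_subset_Icc_self) hradius (hne.mono hmeas) (hne.mono hmem)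
  rw [integrableOn_Icc_iff_integrableOn_Ioc, integral_Icc_eq_integral_Ioc]
  refine ⟨hint, ?_⟩
  have herr : Tendsto (fun ε : ℝ => (f (ω + ε • primitive g) - f ω) / ε
      - ∫ s in Ioc 0 T, H ε s ⬝ᵥ g s) (𝓝[≠] 0) (𝓝 0) := by
    refine squeeze_zero_norm' (hne.mono fun ε hε0 => ?_) hε
    rw [Real.norm_eq_abs, ← intervalIntegral.integral_of_le hT]
    exact (hslope ε hε0).le
  have hsum := herr.add hlim
  simp only [sub_add_cancel, zero_add] at hsum
  exact hsum

/-- If, in addition to the hypotheses of Statement 3, `𝔻f` has left limits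
and is boundedness preserving, then for every càdlàg `ω` and every absolutely continuous path
`η_t = ∫_0^t g_s ds` with `g ∈ L¹([0,T];ℝ^d)`, the map `t ↦ ⟨𝔻_t f(ω), g_t⟩` is Lebesgue
integrable on `[0,T]` and `lim_{ε→0} (f(ω + εη) − f(ω))/ε = ∫_0^T ⟨𝔻_t f(ω), g_t⟩ dt`. -/
theorem statement_4 (T : ℝ) (hT : 0 < T) {d : ℕ}
    (f : (ℝ → Fin d → ℝ) → ℝ) (Df : (ℝ → Fin d → ℝ) → ℝ → Fin d → ℝ)
    (hdiff : HasPathwiseMalliavinDeriv T f Df)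
    (hfcont : UnifContOnCadlag T f)
    (hDcont : ∀ t ∈ Set.Icc (0 : ℝ) T, UnifContOnCadlagVec T (fun ω => Df ω t))
    (hll : HasLeftLimits T Df)
    (hbp : BoundednessPreserving T Df)
    (ω : ℝ → Fin d → ℝ) (hω : CadlagOn T ω)
    (g : ℝ → Fin d → ℝ) (hg : IntegrableOn g (Set.Icc 0 T)) :
    IntegrableOn (fun t => ∑ i, Df ω t i * g t i) (Set.Icc 0 T) ∧
    Tendsto (fun ε : ℝ =>
        (f (ω + ε • fun t => ∫ s in Set.Ioc (0 : ℝ) t, g s) - f ω) / ε)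
      (nhdsWithin 0 {(0 : ℝ)}ᶜ)
      (nhds (∫ t in Set.Icc (0 : ℝ) T, ∑ i, Df ω t i * g t i)) :=
  statement_4_general T hT.le f Df hdiff hfcont hll hbp ω hω g hg
end

section
/- Define, for δ > 0, V(δ) = sup { E_π[f(Y)] − L_δ(E_π[c_N(X, Y)]^{1/p}) : π ∈ Π_c(μ, *) with E_π[c_N(X, Y)] < ∞ }, and V(0) = E_μ[f(X)]. Then lim_{δ→0+} (V(δ) − V(0))/δ = L*( ‖ᵒ𝔻f‖_{L^q(μ)} ) = L*( ( Σ_{n=1}^N E_μ[ |E_μ[𝔻_n f(X) | F_n]|_*^q ] )^{1/q} ); in particular V(δ) = V(0) + L*(‖ᵒ𝔻f‖_{L^q(μ)}) δ + o(δ) as δ → 0+. -/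
open MeasureTheory Filter Set
open scoped ENNReal

noncomputable section

/-- Discrete path space `X = (ℝ^d)^N`. -/
abbrev PathD (N d : ℕ) : Type := Fin N → Fin d → ℝ

/-- The `ℓ_e` norm on `ℝ^d`. -/
def lpnorm {d : ℕ} (e : ℝ) (v : Fin d → ℝ) : ℝ := (∑ i, |v i| ^ e) ^ (1 / e)

/-- Coordinate `x_n` of a path, with the convention `x_0 = 0` (and `x_n = 0` for `n > N`). -/
def coord {N d : ℕ} (x : PathD N d) (n : ℕ) : Fin d → ℝ :=
  if h : 1 ≤ n ∧ n ≤ N then x ⟨n - 1, by omega⟩ else 0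

/-- The cost `c_N(x,y) = Σ_{n=1}^N |Δx_n − Δy_n|^p` (with `|·|` the `ℓ_p` norm). -/
def cN {N d : ℕ} (p : ℝ) (x y : PathD N d) : ℝ :=
  ∑ n ∈ Finset.Icc 1 N,
    lpnorm p ((coord x n - coord x (n - 1)) - (coord y n - coord y (n - 1))) ^ p

/-- The σ-algebra `F_n = σ(x_1, …, x_n)` on the discrete path space. -/
def Fn (N d n : ℕ) : MeasurableSpace (PathD N d) :=
  MeasurableSpace.comap (fun x (i : Fin N) => if (i : ℕ) + 1 ≤ n then x i else 0) inferInstance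

/-- Conditional independence of `m₁` and `m₂` given `m'` under `π`, expressed through
conditional expectations of indicators. -/
def CondIndepOn {Ω : Type*} [MeasurableSpace Ω] (π : Measure Ω)
    (m' m₁ m₂ : MeasurableSpace Ω) : Prop :=
  ∀ A B : Set Ω, MeasurableSet[m₁] A → MeasurableSet[m₂] B →
    (π[(A ∩ B).indicator (fun _ => (1 : ℝ)) | m']) =ᵐ[π]
      (π[A.indicator (fun _ => (1 : ℝ)) | m']) * (π[B.indicator (fun _ => (1 : ℝ)) | m'])

/-- `π` is a coupling with first marginal `μ` which is causal to its second marginal: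
for every `n`, `σ(Y_1,…,Y_n)` is conditionally independent of `σ(X_1,…,X_N)` given `F_n`. -/
def IsCausalStar {N d : ℕ} (μ : Measure (PathD N d))
    (π : Measure (PathD N d × PathD N d)) : Prop :=
  π.map Prod.fst = μ ∧
  ∀ n : ℕ, CondIndepOn π ((Fn N d n).comap Prod.fst)
    ((Fn N d n).comap Prod.snd) ((Fn N d N).comap Prod.fst)

/-- `π` is a causal coupling of `(μ, ν)`. -/
def IsCausalCoupling {N d : ℕ} (μ ν : Measure (PathD N d))
    (π : Measure (PathD N d × PathD N d)) : Prop :=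
  π.map Prod.snd = ν ∧ IsCausalStar μ π

/-- `π` is a bicausal coupling of `(μ, ν)`: both `π` and its swap are causal. -/
def IsBicausalCoupling {N d : ℕ} (μ ν : Measure (PathD N d))
    (π : Measure (PathD N d × PathD N d)) : Prop :=
  IsCausalCoupling μ ν π ∧
  (∀ n : ℕ, CondIndepOn π ((Fn N d n).comap Prod.snd)
    ((Fn N d n).comap Prod.fst) ((Fn N d N).comap Prod.snd))

/-- `μ` is a martingale measure on the discrete path space: every coordinate is integrable
and `E_μ[X_n | F_{n−1}] = X_{n−1}` a.s. (with `X_0 = 0`). -/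
def IsMartingaleMeasure {N d : ℕ} (μ : Measure (PathD N d)) : Prop :=
  ∀ n : ℕ, 1 ≤ n → n ≤ N →
    Integrable (fun x => coord x n) μ ∧
    (μ[(fun x => coord x n) | Fn N d (n - 1)]) =ᵐ[μ] (fun x => coord x (n - 1))


/-- The discrete pathwise Malliavin derivative `𝔻_n f = Σ_{k=n}^N ∂_k f`, where `∂_k f` is the
`ℝ^d`-valued partial gradient of `f` in the `k`-th coordinate block (`k = 1, …, N`). -/
def Dn {N d : ℕ} (f : PathD N d → ℝ) (n : ℕ) (x : PathD N d) : Fin d → ℝ :=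
  fun j => ∑ k : Fin N, if n ≤ (k : ℕ) + 1 then
    fderiv ℝ f x (Pi.single k (Pi.single j 1)) else 0

/-- Standing assumptions on the penalty function `L : [0,∞) → [0,∞]`:
continuous, non-decreasing, `L(0) = 0` and `liminf_{u→∞} L(u)/u^p = +∞`. -/
structure PenaltyAssumptions (p : ℝ) (L : ℝ → ℝ≥0∞) : Prop where
  cont : ContinuousOn L (Set.Ici 0)
  mono : MonotoneOn L (Set.Ici 0)
  zero : L 0 = 0
  growth : Tendsto (fun u : ℝ => L u / ENNReal.ofReal (u ^ p)) atTop (nhds ⊤)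

/-- The convex conjugate `L*(v) = sup_{u ≥ 0} { u v − L(u) }`, valued in the extended reals. -/
def Lconj (L : ℝ → ℝ≥0∞) (v : ℝ) : EReal :=
  ⨆ u : {u : ℝ // 0 ≤ u}, ((u.1 * v : ℝ) : EReal) - ((L u.1 : ℝ≥0∞) : EReal)

/-- The expected transport cost `E_π[c_N(X,Y)]` of a coupling. -/
def costD {N d : ℕ} (p : ℝ) (π : Measure (PathD N d × PathD N d)) : ℝ :=
  ∫ z, cN p z.1 z.2 ∂π

/-- The penalised causal DRO value
`V(δ) = sup_{π ∈ Π_c(μ,*), E_π[c_N] < ∞} { E_π[f(Y)] − δ L(E_π[c_N(X,Y)]^{1/p}/δ) }`,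
valued in the extended reals. -/
def VD {N d : ℕ} (p : ℝ) (L : ℝ → ℝ≥0∞) (μ : Measure (PathD N d))
    (f : PathD N d → ℝ) (δ : ℝ) : EReal :=
  ⨆ π : {π : Measure (PathD N d × PathD N d) //
      IsProbabilityMeasure π ∧ IsCausalStar μ π ∧
      Integrable (fun z => cN p z.1 z.2) π},
    ((∫ z, f z.2 ∂π.1 : ℝ) : EReal) -
      ((ENNReal.ofReal δ * L ((costD p π.1) ^ (1 / p) / δ) : ℝ≥0∞) : EReal)

/-- The `L^q(μ)`-norm `(Σ_{n=1}^N E_μ[|E_μ[𝔻_n f(X)|F_n]|_*^q])^{1/q}` of the optional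
projection of the discrete pathwise Malliavin derivative. -/
def optionalNorm {N d : ℕ} (q : ℝ) (μ : Measure (PathD N d)) (f : PathD N d → ℝ) : ℝ :=
  (∑ n ∈ Finset.Icc 1 N, ∫ x, lpnorm q ((μ[Dn f n | Fn N d n]) x) ^ q ∂μ) ^ (1 / q)

/-- The map `v(e) = (e_1|e_1|^{q−2}, …, e_d|e_d|^{q−2})` on `ℝ^d`. -/
def vmap {d : ℕ} (q : ℝ) (e : Fin d → ℝ) : Fin d → ℝ :=
  fun i => e i * |e i| ^ (q - 2)

/-- The inverse `Δ^{-1}` of the increment map: `(Δ^{-1} y)_n = Σ_{k=1}^n y_k`. -/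
def DeltaInv {N d : ℕ} (y : PathD N d) : PathD N d :=
  fun i => ∑ k : Fin N, if (k : ℕ) ≤ (i : ℕ) then y k else 0

/-- A process `h = (h_n)_{n=1}^N` is predictable if `h_n` is `F_{n−1}`-measurable. -/
def IsPredictable {N d : ℕ} (h : ℕ → PathD N d → Fin d → ℝ) : Prop :=
  ∀ n : ℕ, 1 ≤ n → n ≤ N → Measurable[Fn N d (n - 1)] (h n)

end

open MeasureTheory Filter

/-!
The expansion `E_π[f(Y)] = E_μ[f(X)] + E_π[Df(X)(Y - X)] + o(ε)`, where `ε = E_π[c_N(X, Y)]^{1/p}`,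
holds uniformly over all couplings `π`: the Taylor remainder at `x` in direction `h` is at most
`‖h‖ Ψ(x) + K ‖h‖ ^ p`, where `‖Ψ‖_{L^q(μ)}` is as small as we please once `K` is large.
Abel summation writes the linear term as the pairing of `𝔻f(X)` with the increments of `Y - X`.
For causal `π` the conditional mean of `𝔻_n f(X)` given `X_1, …, X_n` and `Y_1, …, Y_n` is
`(ᵒ𝔻f)_n`, so `𝔻f` may be replaced by `ᵒ𝔻f`, and Hölder's inequality bounds the linear term by
`‖ᵒ𝔻f‖ ε`. If `ᵒ𝔻f ≠ 0`, shifting the increments of `X` along the dual direction of `ᵒ𝔻f`, which is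
adapted, attains this bound for every `ε ≥ 0`. Hence `(V(δ) - V(0)) / δ` is, up to a vanishing
error, the supremum of `u ‖ᵒ𝔻f‖ - L(u)` over `u = ε / δ`, where the growth of `L` confines `u` to a
bounded set.
-/

section

open scoped Topology

section TaylorRemainder

variable {E : Type*} [NormedAddCommGroup E] [NormedSpace ℝ E] {f : E → ℝ} {r A B b K : ℝ} {x : E}

lemma add_rpow_le_two_rpow_mul {s t : ℝ} (hs : 0 ≤ s) (ht : 0 ≤ t) (hr : 0 ≤ r) :
    (s + t) ^ r ≤ 2 ^ r * (s ^ r + t ^ r) := by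
  calc (s + t) ^ r ≤ (2 * max s t) ^ r :=
        Real.rpow_le_rpow (by positivity) (by grind) hr
    _ = 2 ^ r * max s t ^ r := Real.mul_rpow zero_le_two (le_max_of_le_left hs)
    _ ≤ 2 ^ r * (s ^ r + t ^ r) := by
        gcongr
        rcases max_choice s t with h | h <;> rw [h]
        · linarith [Real.rpow_nonneg ht r]
        · linarith [Real.rpow_nonneg hs r]

lemma nonneg_of_norm_fderiv_le (hA : ∀ x, ‖fderiv ℝ f x‖ ≤ A * (1 + ‖x‖ ^ r)) : 0 ≤ A :=
  nonneg_of_mul_nonneg_left ((norm_nonneg _).trans (hA 0)) (by positivity)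

lemma abs_sub_le_of_norm_fderiv_le (hf : Differentiable ℝ f) (hr : 0 ≤ r)
    (hA : ∀ x, ‖fderiv ℝ f x‖ ≤ A * (1 + ‖x‖ ^ r)) (x : E) :
    |f x - f 0| ≤ ‖x‖ * (A * (1 + ‖x‖ ^ r)) := by
  have hA0 := nonneg_of_norm_fderiv_le hA
  have hball : ∀ z ∈ Metric.closedBall (0 : E) ‖x‖, ‖fderiv ℝ f z‖ ≤ A * (1 + ‖x‖ ^ r) :=
    fun z hz => (hA z).trans (by rw [mem_closedBall_zero_iff] at hz; gcongr)
  simpa [mul_comm] using (convex_closedBall (0 : E) ‖x‖).norm_image_sub_le_of_norm_fderiv_le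
    (fun z _ => hf z) hball (x := 0) (y := x) (by simp) (by simp)

/-- The error of the first-order Taylor expansion of `f` at `x` in direction `h`. -/
noncomputable def taylorRemainder (f : E → ℝ) (x h : E) : ℝ :=
  f (x + h) - f x - fderiv ℝ f x h

lemma abs_taylorRemainder_le (hf : Differentiable ℝ f) (hr : 0 ≤ r)
    (hA : ∀ x, ‖fderiv ℝ f x‖ ≤ A * (1 + ‖x‖ ^ r)) (x h : E) :
    |taylorRemainder f x h| ≤
      ‖h‖ * (A * (2 + 2 ^ r) * (1 + ‖x‖ ^ r) + A * (2 + 2 ^ r) * ‖h‖ ^ r) := by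
  have hA0 := nonneg_of_norm_fderiv_le hA
  have hball : ∀ z ∈ Metric.closedBall x ‖h‖, ‖fderiv ℝ f z - fderiv ℝ f x‖ ≤
      A * (2 + 2 ^ r) * (1 + ‖x‖ ^ r) + A * (2 + 2 ^ r) * ‖h‖ ^ r := fun z hz => by
    have hz' : ‖z‖ ≤ ‖x‖ + ‖h‖ := by
      linarith [norm_le_norm_add_norm_sub' z x, mem_closedBall_iff_norm.1 hz]
    have hzr : ‖z‖ ^ r ≤ 2 ^ r * (‖x‖ ^ r + ‖h‖ ^ r) :=
      (Real.rpow_le_rpow (norm_nonneg z) hz' hr).trans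
        (add_rpow_le_two_rpow_mul (norm_nonneg x) (norm_nonneg h) hr)
    calc ‖fderiv ℝ f z - fderiv ℝ f x‖
        ≤ A * (1 + ‖z‖ ^ r) + A * (1 + ‖x‖ ^ r) :=
          (norm_sub_le _ _).trans (add_le_add (hA z) (hA x))
      _ ≤ A * (1 + 2 ^ r * (‖x‖ ^ r + ‖h‖ ^ r)) + A * (1 + ‖x‖ ^ r) := by gcongr
      _ ≤ A * (2 + 2 ^ r) * (1 + ‖x‖ ^ r) + A * (2 + 2 ^ r) * ‖h‖ ^ r := by
          have : 0 ≤ A * (‖x‖ ^ r + 2 * ‖h‖ ^ r + 2 ^ r) := by positivity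
          linarith
  simpa [taylorRemainder, mul_comm] using
    (convex_closedBall x ‖h‖).norm_image_sub_le_of_norm_fderiv_le' (fun z _ => hf z) hball
      (x := x) (y := x + h) (by simp) (by simp)

lemma abs_taylorRemainder_div_norm_le
    (hR : ∀ h, |taylorRemainder f x h| ≤ ‖h‖ * (b + B * ‖h‖ ^ r)) (hb : 0 ≤ b) (hB : 0 ≤ B)
    (h : E) : |taylorRemainder f x h| / ‖h‖ ≤ b + B * ‖h‖ ^ r :=
  div_le_of_le_mul₀ (norm_nonneg h) (by positivity) ((hR h).trans_eq (mul_comm _ _))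

variable [SecondCountableTopology E]

open TopologicalSpace in
/-- The smallest `Ψ ≥ 0` such that `|taylorRemainder f x h| ≤ ‖h‖ * (Ψ + K * ‖h‖ ^ r)` for all `h`.
The supremum runs over a dense sequence of directions so that it is measurable in `x`. -/
noncomputable def remainderExcess (f : E → ℝ) (r K : ℝ) (x : E) : ℝ :=
  ⨆ n : ℕ, max
    (|taylorRemainder f x (denseSeq E n)| / ‖denseSeq E n‖ - K * ‖denseSeq E n‖ ^ r) 0

lemma remainderExcess_nonneg (f : E → ℝ) (r K : ℝ) (x : E) : 0 ≤ remainderExcess f r K x :=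
  Real.iSup_nonneg fun _ => le_max_right _ _

lemma remainderExcess_le (hb : 0 ≤ b)
    (h : ∀ h, |taylorRemainder f x h| / ‖h‖ ≤ b + K * ‖h‖ ^ r) : remainderExcess f r K x ≤ b :=
  ciSup_le fun _ => max_le (sub_le_iff_le_add.2 (h _)) hb

lemma abs_taylorRemainder_le_remainderExcess (hf : Continuous f) (hr : 0 ≤ r)
    (hb : ∀ h, |taylorRemainder f x h| / ‖h‖ ≤ b + K * ‖h‖ ^ r) (h : E) :
    |taylorRemainder f x h| ≤ ‖h‖ * (remainderExcess f r K x + K * ‖h‖ ^ r) := by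
  have hclosed : IsClosed {h : E | |taylorRemainder f x h| ≤
      ‖h‖ * (remainderExcess f r K x + K * ‖h‖ ^ r)} := by
    unfold taylorRemainder
    exact isClosed_le (by fun_prop) (by fun_prop (disch := assumption))
  refine (TopologicalSpace.denseRange_denseSeq E).induction_on h hclosed fun n => ?_
  set e := TopologicalSpace.denseSeq E n
  rcases eq_or_ne e 0 with he | he
  · simp [he, taylorRemainder]
  have hbdd : BddAbove (range fun n => max (|taylorRemainder f x (TopologicalSpace.denseSeq E n)| /
      ‖TopologicalSpace.denseSeq E n‖ - K * ‖TopologicalSpace.denseSeq E n‖ ^ r) 0) :=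
    ⟨max b 0, forall_mem_range.2 fun n => max_le_max_right 0 (sub_le_iff_le_add.2 (hb _))⟩
  have hle : |taylorRemainder f x e| / ‖e‖ - K * ‖e‖ ^ r ≤ remainderExcess f r K x :=
    (le_max_left _ _).trans (le_ciSup hbdd n)
  rwa [sub_le_iff_le_add, div_le_iff₀' (norm_pos_iff.2 he)] at hle

lemma measurable_remainderExcess [MeasurableSpace E] [BorelSpace E] (hf : Continuous f) :
    Measurable (remainderExcess f r K) := by
  refine Measurable.iSup fun n => ?_
  have hR : Measurable fun x => taylorRemainder f x (TopologicalSpace.denseSeq E n) :=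
    (Continuous.measurable (by fun_prop)).sub (measurable_fderiv_apply_const ℝ f _)
  exact ((hR.abs.div_const _).sub_const _).max measurable_const

lemma tendsto_remainderExcess (hf : DifferentiableAt ℝ f x) (hr : 0 < r) (hb : 0 ≤ b) (hB : 0 ≤ B)
    (hR : ∀ h, |taylorRemainder f x h| ≤ ‖h‖ * (b + B * ‖h‖ ^ r)) :
    Tendsto (fun K => remainderExcess f r K x) atTop (𝓝 0) := by
  rw [Metric.tendsto_atTop]
  intro ε hε
  obtain ⟨s, hs, hsmall⟩ := Metric.eventually_nhds_iff.1
    ((hasFDerivAt_iff_isLittleO_nhds_zero.1 hf.hasFDerivAt).def (half_pos hε))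
  refine ⟨B + b / s ^ r, fun K hK => ?_⟩
  have hsr : 0 < s ^ r := by positivity
  have hBK : B ≤ K := (le_add_of_nonneg_right (by positivity)).trans hK
  rw [Real.dist_eq, sub_zero, abs_of_nonneg (remainderExcess_nonneg f r K x)]
  refine (remainderExcess_le (half_pos hε).le fun h => ?_).trans_lt (half_lt_self hε)
  rcases lt_or_ge ‖h‖ s with hh | hh
  · have hnear : |taylorRemainder f x h| ≤ ε / 2 * ‖h‖ := hsmall (by simpa using hh)
    calc |taylorRemainder f x h| / ‖h‖ ≤ ε / 2 :=
          div_le_of_le_mul₀ (norm_nonneg h) (half_pos hε).le hnear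
      _ ≤ ε / 2 + K * ‖h‖ ^ r :=
          le_add_of_nonneg_right (mul_nonneg (hB.trans hBK) (by positivity))
  · calc |taylorRemainder f x h| / ‖h‖ ≤ b + B * ‖h‖ ^ r :=
          abs_taylorRemainder_div_norm_le hR hb hB h
      _ = b / s ^ r * s ^ r + B * ‖h‖ ^ r := by rw [div_mul_cancel₀ _ hsr.ne']
      _ ≤ b / s ^ r * ‖h‖ ^ r + B * ‖h‖ ^ r := by gcongr
      _ = (B + b / s ^ r) * ‖h‖ ^ r := by ring
      _ ≤ ε / 2 + K * ‖h‖ ^ r := by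
          have := mul_le_mul_of_nonneg_right hK (Real.rpow_nonneg (norm_nonneg h) r)
          linarith

end TaylorRemainder

section CouplingExpansion

variable {E : Type*} [NormedAddCommGroup E] {p q A : ℝ}

lemma memLp_const_mul_one_add_norm_rpow {α : Type*} [MeasurableSpace α] {μ : Measure α}
    [IsFiniteMeasure μ] (hpq : p.HolderConjugate q) {g : α → E}
    (hg : MemLp g (ENNReal.ofReal p) μ) (B : ℝ) :
    MemLp (fun a => B * (1 + ‖g a‖ ^ (p - 1))) (ENNReal.ofReal q) μ := by
  have hone : MemLp (fun _ : α => (1 : ℝ)) (ENNReal.ofReal q) μ := memLp_const 1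
  have hpow := hg.norm_rpow_div (ENNReal.ofReal (p - 1))
  rw [← ENNReal.ofReal_div_of_pos hpq.sub_one_pos, ← hpq.conjugate_eq,
    ENNReal.toReal_ofReal hpq.sub_one_pos.le] at hpow
  exact (hone.add hpow).const_mul B

lemma integrable_mul_of_holderConjugate {α : Type*} [MeasurableSpace α] {μ : Measure α}
    (hpq : p.HolderConjugate q) {g k : α → ℝ} (hg : MemLp g (ENNReal.ofReal p) μ)
    (hk : MemLp k (ENNReal.ofReal q) μ) : Integrable (fun x => g x * k x) μ :=
  have := hpq.ennrealOfReal
  hg.integrable_mul hk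

lemma integrable_norm_rpow_of_memLp {α : Type*} [MeasurableSpace α] {μ : Measure α} {g : α → E}
    (hp : 0 < p) (hg : MemLp g (ENNReal.ofReal p) μ) : Integrable (fun x => ‖g x‖ ^ p) μ := by
  simpa only [ENNReal.toReal_ofReal hp.le] using
    hg.integrable_norm_rpow (ENNReal.ofReal_pos.2 hp).ne' ENNReal.ofReal_ne_top

variable [NormedSpace ℝ E] [MeasurableSpace E] [BorelSpace E] {f : E → ℝ} {μ : Measure E}

lemma integrable_of_norm_fderiv_le [IsFiniteMeasure μ]
    (hpq : p.HolderConjugate q)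
    (hmom : MemLp (fun x => x) (ENNReal.ofReal p) μ) (hf : Differentiable ℝ f)
    (hA : ∀ x, ‖fderiv ℝ f x‖ ≤ A * (1 + ‖x‖ ^ (p - 1))) : Integrable f μ := by
  have hbound : Integrable (fun x => ‖x‖ * (A * (1 + ‖x‖ ^ (p - 1)))) μ :=
    integrable_mul_of_holderConjugate hpq hmom.norm
      (memLp_const_mul_one_add_norm_rpow hpq hmom A)
  have hsub : Integrable (fun x => f x - f 0) μ :=
    hbound.mono' (hf.continuous.sub continuous_const).aestronglyMeasurable
      (ae_of_all _ (abs_sub_le_of_norm_fderiv_le hf hpq.sub_one_pos.le hA))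
  simpa [Pi.add_def] using hsub.add (integrable_const (f 0))

variable [SecondCountableTopology E]

lemma tendsto_integral_remainderExcess_rpow [IsFiniteMeasure μ] (hpq : p.HolderConjugate q)
    (hmom : MemLp (fun x => x) (ENNReal.ofReal p) μ) (hf : Differentiable ℝ f) {B : ℝ} (hB : 0 ≤ B)
    (hR : ∀ x h, |taylorRemainder f x h| ≤ ‖h‖ * (B * (1 + ‖x‖ ^ (p - 1)) + B * ‖h‖ ^ (p - 1))) :
    Tendsto (fun K => ∫ x, remainderExcess f (p - 1) K x ^ q ∂μ) atTop (𝓝 0) := by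
  have hq := hpq.symm.pos
  have hdom := integrable_norm_rpow_of_memLp hq (memLp_const_mul_one_add_norm_rpow hpq hmom B)
  rw [← integral_zero E ℝ (μ := μ)]
  refine tendsto_integral_filter_of_dominated_convergence _
    (.of_forall fun K =>
      ((measurable_remainderExcess hf.continuous).pow_const q).aestronglyMeasurable)
    ?_ hdom (ae_of_all _ fun x => ?_)
  · filter_upwards [eventually_ge_atTop B] with K hK
    refine ae_of_all _ fun x => ?_
    have h0 := remainderExcess_nonneg f (p - 1) K x
    rw [Real.norm_of_nonneg (by positivity), Real.norm_of_nonneg (by positivity)]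
    refine Real.rpow_le_rpow h0 (remainderExcess_le (by positivity) fun h => ?_) hq.le
    refine (abs_taylorRemainder_div_norm_le (hR x) (by positivity) hB h).trans ?_
    gcongr
  · have hx := tendsto_remainderExcess (hf x) hpq.sub_one_pos (by positivity) hB (hR x)
    simpa only [Real.zero_rpow hq.ne'] using hx.rpow_const (Or.inr hq.le)

lemma exists_taylor_bound [IsFiniteMeasure μ] (hpq : p.HolderConjugate q)
    (hmom : MemLp (fun x => x) (ENNReal.ofReal p) μ) (hf : Differentiable ℝ f)
    (hA : ∀ x, ‖fderiv ℝ f x‖ ≤ A * (1 + ‖x‖ ^ (p - 1))) {η : ℝ} (hη : 0 < η) :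
    ∃ (Ψ : E → ℝ) (K : ℝ), (∀ x, 0 ≤ Ψ x) ∧ 0 ≤ K ∧ MemLp Ψ (ENNReal.ofReal q) μ ∧
      (∫ x, Ψ x ^ q ∂μ) ^ (1 / q) ≤ η ∧
      ∀ x h, |taylorRemainder f x h| ≤ ‖h‖ * Ψ x + K * ‖h‖ ^ p := by
  have hr := hpq.sub_one_pos
  have hA0 := nonneg_of_norm_fderiv_le hA
  obtain ⟨B, hB, hR⟩ : ∃ B, 0 ≤ B ∧ ∀ x h, |taylorRemainder f x h| ≤
      ‖h‖ * (B * (1 + ‖x‖ ^ (p - 1)) + B * ‖h‖ ^ (p - 1)) :=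
    ⟨_, by positivity, abs_taylorRemainder_le hf hr.le hA⟩
  have hlim : Tendsto (fun K => (∫ x, remainderExcess f (p - 1) K x ^ q ∂μ) ^ (1 / q)) atTop
      (𝓝 0) := by
    simpa only [Real.zero_rpow hpq.symm.one_div_ne_zero] using
      (tendsto_integral_remainderExcess_rpow hpq hmom hf hB hR).rpow_const
        (Or.inr hpq.symm.one_div_pos.le)
  obtain ⟨K, hKη, hBK⟩ := ((hlim.eventually_lt_const hη).and (eventually_ge_atTop B)).exists
  have hquot : ∀ x h, |taylorRemainder f x h| / ‖h‖ ≤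
      B * (1 + ‖x‖ ^ (p - 1)) + K * ‖h‖ ^ (p - 1) := fun x h =>
    (abs_taylorRemainder_div_norm_le (hR x) (by positivity) hB h).trans (by gcongr)
  refine ⟨remainderExcess f (p - 1) K, K, remainderExcess_nonneg f (p - 1) K, hB.trans hBK, ?_,
    hKη.le, fun x h => ?_⟩
  · refine (memLp_const_mul_one_add_norm_rpow hpq hmom B).mono
      (measurable_remainderExcess hf.continuous).aestronglyMeasurable (ae_of_all _ fun x => ?_)
    rw [Real.norm_of_nonneg (remainderExcess_nonneg f (p - 1) K x)]
    exact (remainderExcess_le (by positivity) (hquot x)).trans (le_abs_self _)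
  · refine (abs_taylorRemainder_le_remainderExcess hf.continuous hr.le (hquot x) h).trans_eq ?_
    have hpow : ‖h‖ ^ p = ‖h‖ ^ (p - 1) * ‖h‖ := by
      rw [← Real.rpow_add_one' (norm_nonneg h) (by linarith [hpq.pos]), sub_add_cancel]
    rw [hpow]
    ring

lemma integral_comp_measurePreserving {Ω X : Type*} [MeasurableSpace Ω] [MeasurableSpace X]
    {ρ : Measure Ω} {ν : Measure X} {T : Ω → X} (hT : MeasurePreserving T ρ ν) {g : X → ℝ}
    (hg : AEStronglyMeasurable g ν) : ∫ ω, g (T ω) ∂ρ = ∫ x, g x ∂ν := by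
  rw [← hT.map_eq] at hg ⊢
  exact (integral_map hT.aemeasurable hg).symm

lemma memLp_snd_of_memLp_sub {F : Type*} [NormedAddCommGroup F] [MeasurableSpace F]
    {ν : Measure F} {ρ : Measure (F × F)} {e : ℝ≥0∞} (hρ : MeasurePreserving Prod.fst ρ ν)
    (hmom : MemLp (fun x => x) e ν) (hsub : MemLp (fun z => z.2 - z.1) e ρ) :
    MemLp (fun z => z.2) e ρ := by
  simpa [Pi.add_def] using hsub.add (hmom.comp_measurePreserving hρ)

variable {π : Measure (E × E)}

lemma integrable_fderiv_sub [IsFiniteMeasure μ] (hpq : p.HolderConjugate q)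
    (hmom : MemLp (fun x => x) (ENNReal.ofReal p) μ)
    (hA : ∀ x, ‖fderiv ℝ f x‖ ≤ A * (1 + ‖x‖ ^ (p - 1))) (hπ : MeasurePreserving Prod.fst π μ)
    (hsub : MemLp (fun z => z.2 - z.1) (ENNReal.ofReal p) π) :
    Integrable (fun z => fderiv ℝ f z.1 (z.2 - z.1)) π := by
  have hmeas : Measurable fun z : E × E => fderiv ℝ f z.1 (z.2 - z.1) :=
    isBoundedBilinearMap_apply.continuous.measurable.comp
      (((measurable_fderiv ℝ f).comp measurable_fst).prodMk (measurable_snd.sub measurable_fst))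
  have hgrowth := (memLp_const_mul_one_add_norm_rpow hpq hmom A).comp_measurePreserving hπ
  refine (integrable_mul_of_holderConjugate hpq hsub.norm hgrowth).mono'
    hmeas.aestronglyMeasurable (ae_of_all _ fun z => ?_)
  exact ((fderiv ℝ f z.1).le_of_opNorm_le (hA z.1) _).trans_eq (mul_comm _ _)

lemma integrable_comp_snd_of_norm_fderiv_le [IsFiniteMeasure μ] (hpq : p.HolderConjugate q)
    (hmom : MemLp (fun x => x) (ENNReal.ofReal p) μ) (hf : Differentiable ℝ f)
    (hA : ∀ x, ‖fderiv ℝ f x‖ ≤ A * (1 + ‖x‖ ^ (p - 1))) (hπ : MeasurePreserving Prod.fst π μ)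
    (hsub : MemLp (fun z => z.2 - z.1) (ENNReal.ofReal p) π) :
    Integrable (fun z => f z.2) π := by
  have hsnd := memLp_snd_of_memLp_sub hπ hmom hsub
  have : IsFiniteMeasure (π.map Prod.fst) := hπ.map_eq ▸ inferInstance
  have := Measure.isFiniteMeasure_of_map (μ := π) measurable_fst.aemeasurable
  have hlaw : Integrable f (π.map Prod.snd) :=
    integrable_of_norm_fderiv_le hpq
      ((memLp_map_measure_iff aestronglyMeasurable_id measurable_snd.aemeasurable).2 hsnd) hf hA
  exact hlaw.comp_measurable measurable_snd

lemma integral_sub_sub_eq_integral_taylorRemainder [IsFiniteMeasure μ] (hpq : p.HolderConjugate q)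
    (hmom : MemLp (fun x => x) (ENNReal.ofReal p) μ) (hf : Differentiable ℝ f)
    (hA : ∀ x, ‖fderiv ℝ f x‖ ≤ A * (1 + ‖x‖ ^ (p - 1))) (hπ : MeasurePreserving Prod.fst π μ)
    (hsub : MemLp (fun z => z.2 - z.1) (ENNReal.ofReal p) π) :
    ∫ z, f z.2 ∂π - ∫ x, f x ∂μ - ∫ z, fderiv ℝ f z.1 (z.2 - z.1) ∂π =
      ∫ z, taylorRemainder f z.1 (z.2 - z.1) ∂π := by
  have hfst : Integrable (fun z => f z.1) π :=
    hπ.integrable_comp_of_integrable (integrable_of_norm_fderiv_le hpq hmom hf hA)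
  have hsnd := integrable_comp_snd_of_norm_fderiv_le hpq hmom hf hA hπ hsub
  simp only [taylorRemainder, add_sub_cancel]
  rw [integral_sub (hsnd.sub' hfst) (integrable_fderiv_sub hpq hmom hA hπ hsub),
    integral_sub hsnd hfst,
    integral_comp_measurePreserving hπ hf.continuous.aestronglyMeasurable]

lemma exists_coupling_expansion [IsFiniteMeasure μ] (hpq : p.HolderConjugate q)
    (hmom : MemLp (fun x => x) (ENNReal.ofReal p) μ) (hf : Differentiable ℝ f)
    (hA : ∀ x, ‖fderiv ℝ f x‖ ≤ A * (1 + ‖x‖ ^ (p - 1))) {η : ℝ} (hη : 0 < η) :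
    ∃ M, 0 ≤ M ∧ ∀ π : Measure (E × E), MeasurePreserving Prod.fst π μ →
      MemLp (fun z => z.2 - z.1) (ENNReal.ofReal p) π →
      |∫ z, f z.2 ∂π - ∫ x, f x ∂μ - ∫ z, fderiv ℝ f z.1 (z.2 - z.1) ∂π| ≤
        η * (∫ z, ‖z.2 - z.1‖ ^ p ∂π) ^ (1 / p) + M * ∫ z, ‖z.2 - z.1‖ ^ p ∂π := by
  obtain ⟨Ψ, K, hΨ0, hK, hΨ, hΨη, hR⟩ := exists_taylor_bound hpq hmom hf hA hη
  refine ⟨K, hK, fun π hπ hsub => ?_⟩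
  have hΨπ : MemLp (fun z => Ψ z.1) (ENNReal.ofReal q) π := hΨ.comp_measurePreserving hπ
  have hprod : Integrable (fun z => ‖z.2 - z.1‖ * Ψ z.1) π :=
    integrable_mul_of_holderConjugate hpq hsub.norm hΨπ
  have hpow := (integrable_norm_rpow_of_memLp hpq.pos hsub).const_mul K
  have hHolder : ∫ z, ‖z.2 - z.1‖ * Ψ z.1 ∂π ≤ (∫ z, ‖z.2 - z.1‖ ^ p ∂π) ^ (1 / p) * η := by
    refine (integral_mul_le_Lp_mul_Lq_of_nonneg hpq (ae_of_all _ fun _ => norm_nonneg _)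
      (ae_of_all _ fun z => hΨ0 z.1) hsub.norm hΨπ).trans ?_
    rw [integral_comp_measurePreserving hπ
      (hΨ.aestronglyMeasurable.aemeasurable.pow_const q).aestronglyMeasurable]
    gcongr
  calc |∫ z, f z.2 ∂π - ∫ x, f x ∂μ - ∫ z, fderiv ℝ f z.1 (z.2 - z.1) ∂π|
      ≤ ∫ z, (‖z.2 - z.1‖ * Ψ z.1 + K * ‖z.2 - z.1‖ ^ p) ∂π := by
        rw [integral_sub_sub_eq_integral_taylorRemainder hpq hmom hf hA hπ hsub, ← Real.norm_eq_abs]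
        exact norm_integral_le_of_norm_le (hprod.add hpow)
          (ae_of_all _ fun z => hR z.1 (z.2 - z.1))
    _ = ∫ z, ‖z.2 - z.1‖ * Ψ z.1 ∂π + K * ∫ z, ‖z.2 - z.1‖ ^ p ∂π := by
        rw [integral_add hprod hpow, integral_const_mul]
    _ ≤ η * (∫ z, ‖z.2 - z.1‖ ^ p ∂π) ^ (1 / p) + K * ∫ z, ‖z.2 - z.1‖ ^ p ∂π := by
        linarith

end CouplingExpansion

section PathSpace

variable {N d : ℕ} {p q : ℝ}

/-- The increments `Δx` of a path `x`, with `x_0 = 0`. Entry `i` is `(Δx)_{i+1}`. -/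
def inc (x : PathD N d) : PathD N d := fun i => coord x (i + 1) - coord x i

lemma coord_sub (x y : PathD N d) (n : ℕ) : coord (x - y) n = coord x n - coord y n := by
  unfold coord
  split_ifs <;> simp

lemma abs_coord_le_norm (x : PathD N d) (n : ℕ) (j : Fin d) : |coord x n j| ≤ ‖x‖ := by
  unfold coord
  split_ifs
  · exact (norm_le_pi_norm _ j).trans (norm_le_pi_norm x _)
  · simp

lemma measurable_coord (n : ℕ) : Measurable fun x : PathD N d => coord x n := by
  unfold coord
  split_ifs <;> fun_prop

lemma inc_sub (x y : PathD N d) : inc (x - y) = inc x - inc y := by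
  funext i
  simp only [inc, coord_sub, Pi.sub_apply]
  abel

lemma abs_inc_le (x : PathD N d) (i : Fin N) (j : Fin d) : |inc x i j| ≤ 2 * ‖x‖ := by
  have := abs_sub (coord x (i + 1) j) (coord x i j)
  simp only [inc, Pi.sub_apply]
  linarith [abs_coord_le_norm x (i + 1) j, abs_coord_le_norm x i j]

lemma measurable_inc : Measurable (inc : PathD N d → PathD N d) :=
  measurable_pi_lambda _ fun _ => (measurable_coord _).sub (measurable_coord _)

lemma DeltaInv_inc (x : PathD N d) : DeltaInv (inc x) = x := by
  funext k
  have hfilter : (Finset.range N).filter (fun n => n ≤ (k : ℕ)) = Finset.range (k + 1) := by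
    ext n
    simp only [Finset.mem_filter, Finset.mem_range]
    omega
  calc DeltaInv (inc x) k
      = ∑ n ∈ Finset.range N, if n ≤ (k : ℕ) then coord x (n + 1) - coord x n else 0 :=
        Fin.sum_univ_eq_sum_range
          (fun n => if n ≤ (k : ℕ) then coord x (n + 1) - coord x n else 0) N
    _ = coord x (k + 1) - coord x 0 := by
        rw [← Finset.sum_filter, hfilter, Finset.sum_range_sub]
    _ = x k := by simp [coord]

lemma coord_DeltaInv (y : PathD N d) {n : ℕ} (hn : n ≤ N) :
    coord (DeltaInv y) n = ∑ m : Fin N, if (m : ℕ) < n then y m else 0 := by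
  cases n with
  | zero => simp [coord]
  | succ n => simp [coord, DeltaInv, hn]

lemma inc_DeltaInv (y : PathD N d) : inc (DeltaInv y) = y := by
  funext i
  rw [inc, coord_DeltaInv y (Nat.succ_le_of_lt i.isLt), coord_DeltaInv y i.isLt.le,
    ← Finset.sum_sub_distrib, Finset.sum_eq_single i]
  · simp
  · intro m _ hm
    have hne : (m : ℕ) ≠ i := Fin.val_ne_of_ne hm
    split_ifs <;> first | omega | simp
  · simp

/-- `∑ |y_{n,j}|^e`, the sum over times `n` of the `e`-th powers of the `ℓ_e` norms of `y_n`. -/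
noncomputable def energy (e : ℝ) (y : PathD N d) : ℝ := ∑ a : Fin N × Fin d, |y a.1 a.2| ^ e

lemma energy_nonneg (e : ℝ) (y : PathD N d) : 0 ≤ energy e y :=
  Finset.sum_nonneg fun _ _ => by positivity

lemma lpnorm_rpow {e : ℝ} (he : e ≠ 0) (v : Fin d → ℝ) : lpnorm e v ^ e = ∑ j, |v j| ^ e := by
  rw [lpnorm, one_div, Real.rpow_inv_rpow (Finset.sum_nonneg fun _ _ => by positivity) he]

lemma abs_le_sum_rpow {ι : Type*} [Fintype ι] {e : ℝ} (he : 0 < e) (v : ι → ℝ) (j : ι) :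
    |v j| ≤ (∑ i, |v i| ^ e) ^ (1 / e) := by
  rw [one_div, Real.le_rpow_inv_iff_of_pos (abs_nonneg _)
    (Finset.sum_nonneg fun _ _ => by positivity) he]
  exact Finset.single_le_sum (f := fun i => |v i| ^ e) (fun _ _ => by positivity)
    (Finset.mem_univ j)

lemma sum_Icc_one_eq_sum_fin {M : Type*} [AddCommMonoid M] (F : ℕ → M) (N : ℕ) :
    ∑ n ∈ Finset.Icc 1 N, F n = ∑ i : Fin N, F (i + 1) := by
  rw [Fin.sum_univ_eq_sum_range (fun n => F (n + 1)), Finset.range_eq_Ico,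
    Finset.sum_Ico_add' F 0 N 1]
  rfl

lemma cN_eq_energy (hp : p ≠ 0) (x y : PathD N d) : cN p x y = energy p (inc (y - x)) := by
  rw [cN, sum_Icc_one_eq_sum_fin, energy, Fintype.sum_prod_type]
  refine Finset.sum_congr rfl fun i _ => ?_
  rw [lpnorm_rpow hp]
  refine Finset.sum_congr rfl fun j _ => ?_
  rw [inc_sub, ← abs_neg]
  simp [inc]

lemma norm_le_energy_inc (hp : 0 < p) (x : PathD N d) : ‖x‖ ≤ N * energy p (inc x) ^ (1 / p) := by
  have hroot : 0 ≤ energy p (inc x) ^ (1 / p) := Real.rpow_nonneg (energy_nonneg p _) _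
  have hbound : 0 ≤ (N : ℝ) * energy p (inc x) ^ (1 / p) := by positivity
  refine (pi_norm_le_iff_of_nonneg hbound).2 fun k =>
    (pi_norm_le_iff_of_nonneg hbound).2 fun j => ?_
  calc |x k j| = |∑ i : Fin N, if (i : ℕ) ≤ k then inc x i j else 0| := by
        conv_lhs => rw [← DeltaInv_inc x, DeltaInv, Finset.sum_apply]
        simp only [ite_apply, Pi.zero_apply]
    _ ≤ ∑ _i : Fin N, energy p (inc x) ^ (1 / p) := by
        refine (Finset.abs_sum_le_sum_abs _ _).trans (Finset.sum_le_sum fun i _ => ?_)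
        split_ifs
        · exact abs_le_sum_rpow hp (fun a : Fin N × Fin d => inc x a.1 a.2) (i, j)
        · simpa only [abs_zero] using hroot
    _ = N * energy p (inc x) ^ (1 / p) := by simp

lemma norm_rpow_le_cN (hp : 0 < p) (x y : PathD N d) :
    ‖y - x‖ ^ p ≤ (N : ℝ) ^ p * cN p x y := by
  refine (Real.rpow_le_rpow (norm_nonneg _) (norm_le_energy_inc hp _) hp.le).trans_eq ?_
  rw [Real.mul_rpow (by positivity) (Real.rpow_nonneg (energy_nonneg p _) _), one_div,
    Real.rpow_inv_rpow (energy_nonneg p _) hp.ne', cN_eq_energy hp.ne']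

lemma measurable_cN (hp : p ≠ 0) : Measurable fun z : PathD N d × PathD N d => cN p z.1 z.2 := by
  have hinc : Measurable fun z : PathD N d × PathD N d => inc (z.2 - z.1) :=
    measurable_inc.comp (measurable_snd.sub measurable_fst)
  simp only [cN_eq_energy hp, energy]
  fun_prop

lemma memLp_sub_of_integrable_cN (hp : 0 < p) {π : Measure (PathD N d × PathD N d)}
    (hcost : Integrable (fun z => cN p z.1 z.2) π) :
    MemLp (fun z : PathD N d × PathD N d => z.2 - z.1) (ENNReal.ofReal p) π := by
  have hmeas : AEStronglyMeasurable (fun z : PathD N d × PathD N d => z.2 - z.1) π :=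
    (measurable_snd.sub measurable_fst).aestronglyMeasurable
  rw [← integrable_norm_rpow_iff hmeas (ENNReal.ofReal_pos.2 hp).ne' ENNReal.ofReal_ne_top,
    ENNReal.toReal_ofReal hp.le]
  refine (hcost.const_mul ((N : ℝ) ^ p)).mono'
    (hmeas.norm.aemeasurable.pow_const p).aestronglyMeasurable (ae_of_all _ fun z => ?_)
  rw [Real.norm_of_nonneg (by positivity)]
  exact norm_rpow_le_cN hp z.1 z.2

/-- The direction in which `Dn f n · j` differentiates: the `j`-th basis vector at all times from
`n` on. -/
def tailVec (N : ℕ) {d : ℕ} (n : ℕ) (j : Fin d) : PathD N d :=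
  fun k => if n ≤ (k : ℕ) + 1 then Pi.single j 1 else 0

lemma norm_tailVec_le_one (n : ℕ) (j : Fin d) : ‖tailVec N n j‖ ≤ 1 := by
  refine (pi_norm_le_iff_of_nonneg zero_le_one).2 fun k =>
    (pi_norm_le_iff_of_nonneg zero_le_one).2 fun i => ?_
  unfold tailVec
  split_ifs
  · rw [Pi.single_apply]
    split_ifs <;> simp
  · simp

lemma Dn_eq_fderiv_tailVec (f : PathD N d → ℝ) (n : ℕ) (x : PathD N d) (j : Fin d) :
    Dn f n x j = fderiv ℝ f x (tailVec N n j) := by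
  conv_rhs => rw [← Finset.univ_sum_single (tailVec N n j)]
  simp only [Dn, tailVec, map_sum]
  refine Finset.sum_congr rfl fun k _ => ?_
  split_ifs <;> simp

/-- The pathwise Malliavin derivative `𝔻f` as a process. Entry `i` is `𝔻_{i+1} f`. -/
noncomputable def malliavin (f : PathD N d → ℝ) (x : PathD N d) : PathD N d :=
  fun i => Dn f (i + 1) x

lemma measurable_malliavin (f : PathD N d → ℝ) : Measurable (malliavin f) :=
  measurable_pi_lambda _ fun i => measurable_pi_lambda _ fun j => by
    simpa only [malliavin, Dn_eq_fderiv_tailVec] using measurable_fderiv_apply_const ℝ f _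

lemma abs_malliavin_le_norm_fderiv (f : PathD N d → ℝ) (x : PathD N d) (i : Fin N) (j : Fin d) :
    |malliavin f x i j| ≤ ‖fderiv ℝ f x‖ := by
  rw [malliavin, Dn_eq_fderiv_tailVec]
  exact (fderiv ℝ f x).unit_le_opNorm _ (norm_tailVec_le_one _ j)

lemma sum_inc_smul_tailVec (x : PathD N d) :
    ∑ a : Fin N × Fin d, inc x a.1 a.2 • tailVec N (a.1 + 1) a.2 = x := by
  conv_rhs => rw [← DeltaInv_inc x]
  funext k j
  simp only [Fintype.sum_prod_type, Finset.sum_apply, DeltaInv, Pi.smul_apply, tailVec,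
    ite_apply, Pi.zero_apply, smul_eq_mul, add_le_add_iff_right]
  refine Finset.sum_congr rfl fun i _ => ?_
  split_ifs <;> simp [Pi.single_apply]

/-- Abel summation moves the partial sums of the increments onto the gradient. -/
lemma fderiv_apply_eq_sum_malliavin (f : PathD N d → ℝ) (x h : PathD N d) :
    fderiv ℝ f x h = ∑ a : Fin N × Fin d, malliavin f x a.1 a.2 * inc h a.1 a.2 := by
  conv_lhs => rw [← sum_inc_smul_tailVec h]
  simp only [map_sum, map_smul, smul_eq_mul, malliavin, Dn_eq_fderiv_tailVec, mul_comm]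

lemma norm_fderiv_le_of_lpnorm_Dn_le {C r : ℝ} (hq : 0 < q) {f : PathD N d → ℝ}
    (hgrow : ∀ n : ℕ, ∀ x : PathD N d, lpnorm q (Dn f n x) ≤ C * (1 + ‖x‖ ^ r)) (x : PathD N d) :
    ‖fderiv ℝ f x‖ ≤ Fintype.card (Fin N × Fin d) * (|C| * 2) * (1 + ‖x‖ ^ r) := by
  have hentry : ∀ i j, |malliavin f x i j| ≤ |C| * (1 + ‖x‖ ^ r) := fun i j =>
    ((abs_le_sum_rpow hq (Dn f (i + 1) x) j).trans (hgrow (i + 1) x)).trans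
      (by gcongr; exact le_abs_self C)
  refine ContinuousLinearMap.opNorm_le_bound _ (by positivity) fun h => ?_
  calc |fderiv ℝ f x h|
      ≤ ∑ a : Fin N × Fin d, |malliavin f x a.1 a.2 * inc h a.1 a.2| := by
        rw [fderiv_apply_eq_sum_malliavin]
        exact Finset.abs_sum_le_sum_abs _ _
    _ ≤ ∑ _a : Fin N × Fin d, |C| * (1 + ‖x‖ ^ r) * (2 * ‖h‖) := by
        gcongr with a
        rw [abs_mul]
        gcongr
        · exact hentry a.1 a.2
        · exact abs_inc_le h a.1 a.2
    _ = Fintype.card (Fin N × Fin d) * (|C| * 2) * (1 + ‖x‖ ^ r) * ‖h‖ := by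
        rw [Finset.sum_const, nsmul_eq_mul, Finset.card_univ]
        ring

end PathSpace

section ConditionalIndependence

variable {Ω : Type*} {m m₁ m₂ mΩ : MeasurableSpace Ω} {π : Measure Ω} [IsFiniteMeasure π]

lemma integral_mul_condExp (hm : m ≤ mΩ) {g φ : Ω → ℝ} (hg : Integrable g π)
    (hφ : StronglyMeasurable[m] φ) (hgφ : Integrable (fun ω => g ω * φ ω) π) :
    ∫ ω, g ω * φ ω ∂π = ∫ ω, (π[g | m]) ω * φ ω ∂π := by
  rw [← integral_condExp hm]
  exact integral_congr_ae (condExp_mul_of_stronglyMeasurable_right hφ hgφ hg)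

lemma indicator_one_mul_eq (A : Set Ω) (g : Ω → ℝ) :
    (fun ω => A.indicator (fun _ => (1 : ℝ)) ω * g ω) = A.indicator g := by
  funext ω
  by_cases hω : ω ∈ A <;> simp [hω]

lemma setIntegral_eq_integral_condExp_indicator_mul (hm : m ≤ mΩ) {A : Set Ω}
    (hA : MeasurableSet A) {φ : Ω → ℝ} (hφ : StronglyMeasurable[m] φ) (hφi : Integrable φ π) :
    ∫ ω in A, φ ω ∂π = ∫ ω, (π[A.indicator (fun _ => (1 : ℝ)) | m]) ω * φ ω ∂π := by
  rw [← integral_mul_condExp hm ((integrable_const 1).indicator hA) hφ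
    (indicator_one_mul_eq A φ ▸ hφi.indicator hA), indicator_one_mul_eq, integral_indicator hA]

/-- `π[· | m]` is self-adjoint, here with a bounded function on one side. -/
lemma setIntegral_condExp_eq_integral_mul (hm : m ≤ mΩ) {A : Set Ω} (hA : MeasurableSet A)
    {g : Ω → ℝ} (hg : Integrable g π) :
    ∫ ω in A, (π[g | m]) ω ∂π = ∫ ω, (π[A.indicator (fun _ => (1 : ℝ)) | m]) ω * g ω ∂π := by
  have hbdd : ∀ᵐ ω ∂π, ‖(π[A.indicator (fun _ => (1 : ℝ)) | m]) ω‖ ≤ 1 :=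
    ae_bdd_abs_condExp_of_ae_bdd_abs (ae_of_all _ fun ω => by by_cases hω : ω ∈ A <;> simp [hω])
  rw [setIntegral_eq_integral_condExp_indicator_mul hm hA stronglyMeasurable_condExp
    integrable_condExp]
  simp only [mul_comm _ ((π[g | m]) _), mul_comm _ (g _)]
  exact (integral_mul_condExp hm hg stronglyMeasurable_condExp
    (hg.mul_bdd integrable_condExp.1 hbdd)).symm

namespace CondIndepOn

lemma condExp_indicator_ae_eq (h : CondIndepOn π m m₁ m₂) (hm : m ≤ m₂) (hm₁ : m₁ ≤ mΩ)
    (hm₂ : m₂ ≤ mΩ) {A : Set Ω} (hA : MeasurableSet[m₁] A) :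
    π[A.indicator (fun _ => (1 : ℝ)) | m] =ᵐ[π] π[A.indicator (fun _ => (1 : ℝ)) | m₂] := by
  have hAΩ := hm₁ A hA
  refine ae_eq_condExp_of_forall_setIntegral_eq hm₂ ((integrable_const 1).indicator hAΩ)
    (fun _ _ _ => integrable_condExp.integrableOn) (fun B hB _ => ?_)
    (stronglyMeasurable_condExp.mono hm).aestronglyMeasurable
  have hBΩ := hm₂ B hB
  set a : Ω → ℝ := A.indicator fun _ => 1
  set b : Ω → ℝ := B.indicator fun _ => 1
  calc ∫ ω in B, (π[a | m]) ω ∂π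
      = ∫ ω, (π[b | m]) ω * (π[a | m]) ω ∂π :=
        setIntegral_eq_integral_condExp_indicator_mul (hm.trans hm₂) hBΩ
          stronglyMeasurable_condExp integrable_condExp
    _ = ∫ ω, (π[a | m]) ω * (π[b | m]) ω ∂π := by simp only [mul_comm]
    _ = ∫ ω, (A ∩ B).indicator (fun _ => (1 : ℝ)) ω ∂π := by
        rw [← integral_condExp (hm.trans hm₂) (f := (A ∩ B).indicator fun _ => (1 : ℝ))]
        exact (integral_congr_ae (h A B hA hB)).symm
    _ = ∫ ω in B, a ω ∂π := by
        rw [← integral_indicator hBΩ, inter_comm, indicator_indicator]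

lemma setIntegral_condExp_eq (h : CondIndepOn π m m₁ m₂) (hm : m ≤ m₂) (hm₁ : m₁ ≤ mΩ)
    (hm₂ : m₂ ≤ mΩ) {g : Ω → ℝ} (hg : Integrable g π) (hgm : StronglyMeasurable[m₂] g) {A : Set Ω}
    (hA : MeasurableSet[m₁] A) : ∫ ω in A, (π[g | m]) ω ∂π = ∫ ω in A, g ω ∂π := by
  have hAΩ := hm₁ A hA
  calc ∫ ω in A, (π[g | m]) ω ∂π
      = ∫ ω, (π[A.indicator (fun _ => (1 : ℝ)) | m]) ω * g ω ∂π :=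
        setIntegral_condExp_eq_integral_mul (hm.trans hm₂) hAΩ hg
    _ = ∫ ω, (π[A.indicator (fun _ => (1 : ℝ)) | m₂]) ω * g ω ∂π :=
        integral_congr_ae ((h.condExp_indicator_ae_eq hm hm₁ hm₂ hA).mul .rfl)
    _ = ∫ ω in A, g ω ∂π :=
        (setIntegral_eq_integral_condExp_indicator_mul hm₂ hAΩ hgm hg).symm

lemma integral_mul (h : CondIndepOn π m m₁ m₂) (hm : m ≤ m₂) (hm₁ : m₁ ≤ mΩ) (hm₂ : m₂ ≤ mΩ)
    {g φ : Ω → ℝ} (hg : Integrable g π) (hgm : StronglyMeasurable[m₂] g)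
    (hφ : StronglyMeasurable[m₁] φ) (hgφ : Integrable (fun ω => g ω * φ ω) π)
    (hgφ' : Integrable (fun ω => (π[g | m]) ω * φ ω) π) :
    ∫ ω, g ω * φ ω ∂π = ∫ ω, (π[g | m]) ω * φ ω ∂π := by
  have htower : π[π[g | m] | m₁] =ᵐ[π] π[g | m₁] :=
    ae_eq_condExp_of_forall_setIntegral_eq hm₁ hg (fun _ _ _ => integrable_condExp.integrableOn)
      (fun A hA _ => by
        rw [setIntegral_condExp hm₁ integrable_condExp hA,
          h.setIntegral_condExp_eq hm hm₁ hm₂ hg hgm hA])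
      stronglyMeasurable_condExp.aestronglyMeasurable
  rw [integral_mul_condExp hm₁ hg hφ hgφ, integral_mul_condExp hm₁ integrable_condExp hφ hgφ']
  exact integral_congr_ae (htower.symm.mul .rfl)

end CondIndepOn

lemma condExp_comp_measurePreserving {X : Type*} {m mX : MeasurableSpace X} {μ : Measure X}
    [IsFiniteMeasure μ] {T : Ω → X} (hT : MeasurePreserving T π μ) (hm : m ≤ mX) {g : X → ℝ}
    (hg : Integrable g μ) :
    (fun ω => (μ[g | m]) (T ω)) =ᵐ[π] π[fun ω => g (T ω) | m.comap T] := by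
  have hle : m.comap T ≤ mΩ := (MeasurableSpace.comap_mono hm).trans hT.measurable.comap_le
  refine ae_eq_condExp_of_forall_setIntegral_eq hle (hT.integrable_comp_of_integrable hg)
    (fun _ _ _ => (hT.integrable_comp_of_integrable integrable_condExp).integrableOn) ?_
    (stronglyMeasurable_condExp.comp_measurable (comap_measurable T)).aestronglyMeasurable
  rintro _ ⟨B, hB, rfl⟩ _
  have hchange : ∀ k : X → ℝ, Integrable k μ →
      ∫ ω in T ⁻¹' B, k (T ω) ∂π = ∫ x in B, k x ∂μ := fun k hk => by
    rw [← hT.map_eq] at hk ⊢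
    exact (setIntegral_map (hm B hB) hk.1 hT.measurable.aemeasurable).symm
  rw [hchange _ integrable_condExp, hchange _ hg, setIntegral_condExp hm hg hB]

end ConditionalIndependence

section Causality

variable {N d : ℕ}

lemma Fn_le (N d n : ℕ) : Fn N d n ≤ (inferInstance : MeasurableSpace (PathD N d)) := by
  refine Measurable.comap_le (measurable_pi_lambda _ fun i => ?_)
  split_ifs <;> fun_prop

lemma measurable_eval_Fn {n : ℕ} {i : Fin N} (hi : (i : ℕ) + 1 ≤ n) :
    Measurable[Fn N d n] (fun x : PathD N d => x i) := by
  have h := (measurable_pi_apply i).comp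
    (comap_measurable (fun x : PathD N d => fun i : Fin N => if (i : ℕ) + 1 ≤ n then x i else 0))
  simp only [Function.comp_def, if_pos hi] at h
  exact h

lemma measurable_to_Fn {Ω : Type*} {m : MeasurableSpace Ω} {n : ℕ} {Z : Ω → PathD N d}
    (hZ : ∀ i : Fin N, (i : ℕ) + 1 ≤ n → Measurable fun ω => Z ω i) :
    Measurable[m, Fn N d n] Z := by
  refine measurable_comap_iff.2 (measurable_pi_lambda _ fun i => ?_)
  by_cases hi : (i : ℕ) + 1 ≤ n
  · simpa only [Function.comp_def, if_pos hi] using hZ i hi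
  · simpa only [Function.comp_def, if_neg hi] using measurable_const

lemma Fn_mono {n k : ℕ} (h : n ≤ k) : Fn N d n ≤ Fn N d k := by
  have hid : Measurable[Fn N d k, Fn N d n] (id : PathD N d → PathD N d) :=
    measurable_to_Fn fun i hi => measurable_eval_Fn (hi.trans h)
  simpa only [MeasurableSpace.comap_id] using hid.comap_le

lemma Fn_last (N d : ℕ) : Fn N d N = (inferInstance : MeasurableSpace (PathD N d)) := by
  refine le_antisymm (Fn_le N d N) ?_
  have hid : Measurable[Fn N d N] (id : PathD N d → PathD N d) :=
    @measurable_pi_lambda _ _ _ (Fn N d N) _ _ fun i => measurable_eval_Fn i.isLt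
  simpa only [MeasurableSpace.comap_id] using hid.comap_le

lemma comap_fst_Fn_le (N d n : ℕ) : (Fn N d n).comap Prod.fst ≤
    (inferInstance : MeasurableSpace (PathD N d × PathD N d)) :=
  (MeasurableSpace.comap_mono (Fn_le N d n)).trans measurable_fst.comap_le

lemma comap_snd_Fn_le (N d n : ℕ) : (Fn N d n).comap Prod.snd ≤
    (inferInstance : MeasurableSpace (PathD N d × PathD N d)) :=
  (MeasurableSpace.comap_mono (Fn_le N d n)).trans measurable_snd.comap_le

/-- A map of the path space is adapted if its value at each time depends only on the path up to
that time. Adapted maps give the causal perturbations `X ↦ Z X`. -/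
def IsAdaptedMap (Z : PathD N d → PathD N d) : Prop :=
  ∀ i : Fin N, Measurable[Fn N d (i + 1)] fun x => Z x i

lemma isAdaptedMap_inc : IsAdaptedMap (inc : PathD N d → PathD N d) := by
  intro i
  have hcoord : ∀ n ≤ (i : ℕ) + 1, Measurable[Fn N d (i + 1)] fun x : PathD N d => coord x n := by
    intro n hn
    unfold coord
    split_ifs
    · exact measurable_eval_Fn (by simp only; omega)
    · exact measurable_const
  exact (hcoord _ le_rfl).sub (hcoord _ (Nat.le_succ _))

namespace IsAdaptedMap

variable {Z : PathD N d → PathD N d}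

lemma measurable_Fn (hZ : IsAdaptedMap Z) (n : ℕ) : Measurable[Fn N d n, Fn N d n] Z :=
  measurable_to_Fn fun i hi => (hZ i).mono (Fn_mono hi) le_rfl

lemma measurable (hZ : IsAdaptedMap Z) : Measurable Z :=
  measurable_pi_lambda _ fun i => (hZ i).mono (Fn_le N d _) le_rfl

lemma measurable_entry (hZ : IsAdaptedMap Z) (i : Fin N) (j : Fin d) :
    Measurable[Fn N d (i + 1)] fun x => Z x i j :=
  (measurable_pi_apply j).comp (hZ i)

lemma add_DeltaInv (hZ : IsAdaptedMap Z) : IsAdaptedMap fun x => x + DeltaInv (Z x) := by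
  intro i
  refine (measurable_eval_Fn le_rfl).add (Finset.measurable_fun_sum _ fun k _ => ?_)
  split_ifs with hk
  · exact (hZ k).mono (Fn_mono (by simpa using hk)) le_rfl
  · exact measurable_const

end IsAdaptedMap

section ConditionalExpectation

variable {Ω : Type*} {m mΩ : MeasurableSpace Ω} {π : Measure Ω} [IsFiniteMeasure π]

lemma condExp_inter_ae_eq_mul (hm : m ≤ mΩ) {A A' B : Set Ω} (hA' : MeasurableSet[m] A')
    (h : A =ᵐ[π] A') (hB : MeasurableSet B) :
    π[(A ∩ B).indicator (fun _ => (1 : ℝ)) | m] =ᵐ[π]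
      π[A.indicator (fun _ => (1 : ℝ)) | m] * π[B.indicator (fun _ => (1 : ℝ)) | m] := by
  have hA : π[A.indicator (fun _ => (1 : ℝ)) | m] =ᵐ[π] A'.indicator fun _ => 1 := by
    refine (condExp_congr_ae (indicator_ae_eq_of_ae_eq_set h)).trans ?_
    rw [condExp_of_stronglyMeasurable hm (stronglyMeasurable_const.indicator hA')
      ((integrable_const 1).indicator (hm _ hA'))]
  calc π[(A ∩ B).indicator (fun _ => (1 : ℝ)) | m]
      =ᵐ[π] π[A'.indicator (B.indicator fun _ => (1 : ℝ)) | m] := by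
        rw [indicator_indicator]
        exact condExp_congr_ae (indicator_ae_eq_of_ae_eq_set (h.inter (ae_eq_refl B)))
    _ =ᵐ[π] A'.indicator (π[B.indicator (fun _ => (1 : ℝ)) | m]) :=
        condExp_indicator ((integrable_const 1).indicator hB) hA'
    _ =ᵐ[π] π[A.indicator (fun _ => (1 : ℝ)) | m] * π[B.indicator (fun _ => (1 : ℝ)) | m] := by
        filter_upwards [hA] with ω hω
        rw [Pi.mul_apply, hω]
        by_cases h : ω ∈ A' <;> simp [h]

end ConditionalExpectation

lemma IsAdaptedMap.isCausalStar_map {μ : Measure (PathD N d)} [IsFiniteMeasure μ]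
    {Z : PathD N d → PathD N d} (hZ : IsAdaptedMap Z) :
    IsCausalStar μ (μ.map fun x => (x, Z x)) := by
  have hgraph : Measurable fun x => (x, Z x) := measurable_id.prodMk hZ.measurable
  refine ⟨by rw [Measure.map_map measurable_fst hgraph]; exact Measure.map_id, fun n => ?_⟩
  rintro _ _ ⟨S, hS, rfl⟩ ⟨T, hT, rfl⟩
  have hZae : ∀ᵐ z ∂(μ.map fun x => (x, Z x)), z.2 = Z z.1 :=
    (ae_map_iff hgraph.aemeasurable
      (measurableSet_eq_fun measurable_snd (hZ.measurable.comp measurable_fst))).2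
      (ae_of_all _ fun _ => rfl)
  have hpast : (Prod.snd ⁻¹' S : Set (PathD N d × PathD N d))
      =ᵐ[μ.map fun x => (x, Z x)] Prod.fst ⁻¹' (Z ⁻¹' S) := by
    filter_upwards [hZae] with z hz
    exact propext (by change z.2 ∈ S ↔ Z z.1 ∈ S; rw [hz])
  exact condExp_inter_ae_eq_mul (comap_fst_Fn_le N d n) ⟨_, hZ.measurable_Fn n hS, rfl⟩ hpast
    (measurable_fst (Fn_le N d N T hT))

end Causality

section HolderFamily

variable {Ω ι : Type*} [MeasurableSpace Ω] [Fintype ι] {π : Measure Ω} {p q : ℝ}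

lemma integrable_sum_abs_rpow {e : ℝ} (he : 0 < e) {g : Ω → ι → ℝ}
    (hg : MemLp g (ENNReal.ofReal e) π) : Integrable (fun z => ∑ a, |g z a| ^ e) π :=
  integrable_finsetSum _ fun a _ => integrable_norm_rpow_of_memLp he (hg.eval a)

lemma rpow_one_div_sum_abs_rpow {e : ℝ} (he : 0 < e) (v : ι → ℝ) :
    ((∑ a, |v a| ^ e) ^ (1 / e)) ^ e = ∑ a, |v a| ^ e := by
  rw [one_div, Real.rpow_inv_rpow (Finset.sum_nonneg fun _ _ => by positivity) he.ne']

lemma memLp_rpow_sum_abs_rpow {e : ℝ} (he : 0 < e) {g : Ω → ι → ℝ}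
    (hg : MemLp g (ENNReal.ofReal e) π) :
    MemLp (fun z => (∑ a, |g z a| ^ e) ^ (1 / e)) (ENNReal.ofReal e) π := by
  have hint := integrable_sum_abs_rpow he hg
  rw [← integrable_norm_rpow_iff (hint.1.aemeasurable.pow_const _).aestronglyMeasurable
    (ENNReal.ofReal_pos.2 he).ne' ENNReal.ofReal_ne_top, ENNReal.toReal_ofReal he.le]
  refine hint.congr (ae_of_all _ fun z => ?_)
  simp only [Real.norm_of_nonneg (show 0 ≤ (∑ a, |g z a| ^ e) ^ (1 / e) by positivity),
    rpow_one_div_sum_abs_rpow he]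

lemma integral_sum_mul_le_Lp_mul_Lq (hpq : p.HolderConjugate q) {g k : Ω → ι → ℝ}
    (hg : MemLp g (ENNReal.ofReal p) π) (hk : MemLp k (ENNReal.ofReal q) π) :
    ∫ z, ∑ a, g z a * k z a ∂π ≤
      (∫ z, ∑ a, |g z a| ^ p ∂π) ^ (1 / p) * (∫ z, ∑ a, |k z a| ^ q ∂π) ^ (1 / q) := by
  have hG := memLp_rpow_sum_abs_rpow hpq.pos hg
  have hK := memLp_rpow_sum_abs_rpow hpq.symm.pos hk
  calc ∫ z, ∑ a, g z a * k z a ∂π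
      ≤ ∫ z, (∑ a, |g z a| ^ p) ^ (1 / p) * (∑ a, |k z a| ^ q) ^ (1 / q) ∂π :=
        integral_mono
          (integrable_finsetSum _ fun a _ =>
            integrable_mul_of_holderConjugate hpq (hg.eval a) (hk.eval a))
          (integrable_mul_of_holderConjugate hpq hG hK)
          fun z => Real.inner_le_Lp_mul_Lq _ _ _ hpq
    _ ≤ (∫ z, ((∑ a, |g z a| ^ p) ^ (1 / p)) ^ p ∂π) ^ (1 / p) *
          (∫ z, ((∑ a, |k z a| ^ q) ^ (1 / q)) ^ q ∂π) ^ (1 / q) :=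
        integral_mul_le_Lp_mul_Lq_of_nonneg hpq (ae_of_all _ fun z => by positivity)
          (ae_of_all _ fun z => by positivity) hG hK
    _ = (∫ z, ∑ a, |g z a| ^ p ∂π) ^ (1 / p) * (∫ z, ∑ a, |k z a| ^ q ∂π) ^ (1 / q) := by
        simp only [rpow_one_div_sum_abs_rpow hpq.pos, rpow_one_div_sum_abs_rpow hpq.symm.pos]

end HolderFamily

section OptionalProjection

variable {N d : ℕ} {p q A : ℝ} {μ : Measure (PathD N d)} {f : PathD N d → ℝ}

lemma memLp_inc {Ω : Type*} [MeasurableSpace Ω] {π : Measure Ω} {e : ℝ≥0∞} {g : Ω → PathD N d}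
    (hg : MemLp g e π) : MemLp (fun z => inc (g z)) e π := by
  refine .of_eval fun i => .of_eval fun j => ?_
  have hmeas : Measurable fun x : PathD N d => inc x i j := by
    have := measurable_inc (N := N) (d := d)
    fun_prop
  refine (hg.norm.const_mul 2).mono
    (hmeas.comp_aemeasurable hg.aestronglyMeasurable.aemeasurable).aestronglyMeasurable
    (ae_of_all _ fun z => ?_)
  exact (abs_inc_le (g z) i j).trans (le_abs_self _)

lemma memLp_malliavin [IsFiniteMeasure μ] (hpq : p.HolderConjugate q)
    (hmom : MemLp (fun x => x) (ENNReal.ofReal p) μ)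
    (hA : ∀ x, ‖fderiv ℝ f x‖ ≤ A * (1 + ‖x‖ ^ (p - 1))) :
    MemLp (malliavin f) (ENNReal.ofReal q) μ := by
  refine (memLp_const_mul_one_add_norm_rpow hpq hmom A).mono
    (measurable_malliavin f).aestronglyMeasurable (ae_of_all _ fun x => ?_)
  refine ((pi_norm_le_iff_of_nonneg (norm_nonneg _)).2 fun i =>
    (pi_norm_le_iff_of_nonneg (norm_nonneg _)).2 fun j =>
      abs_malliavin_le_norm_fderiv f x i j).trans ((hA x).trans (le_abs_self _))

/-- The optional projection `ᵒ𝔻f` as a process. Entry `i` is `E_μ[𝔻_{i+1} f | F_{i+1}]`. -/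
noncomputable def optProj (μ : Measure (PathD N d)) (f : PathD N d → ℝ) (x : PathD N d) :
    PathD N d :=
  fun i => (μ[Dn f (i + 1) | Fn N d (i + 1)]) x

lemma isAdaptedMap_optProj (μ : Measure (PathD N d)) (f : PathD N d → ℝ) :
    IsAdaptedMap (optProj μ f) := fun _ => stronglyMeasurable_condExp.measurable

lemma optProj_ae_eq_condExp (hD : Integrable (malliavin f) μ) (i : Fin N) (j : Fin d) :
    (fun x => optProj μ f x i j) =ᵐ[μ] μ[fun x => malliavin f x i j | Fn N d (i + 1)] :=
  (ContinuousLinearMap.proj (R := ℝ) (φ := fun _ : Fin d => ℝ) j).comp_condExp_comm (hD.eval i)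

lemma optionalNorm_eq (hq : 0 < q) (hW : MemLp (optProj μ f) (ENNReal.ofReal q) μ) :
    optionalNorm q μ f = (∫ x, energy q (optProj μ f x) ∂μ) ^ (1 / q) := by
  have hint : ∀ i, Integrable (fun x => ∑ j, |optProj μ f x i j| ^ q) μ := fun i =>
    integrable_sum_abs_rpow hq (hW.eval i)
  simp only [optionalNorm, sum_Icc_one_eq_sum_fin, energy, Fintype.sum_prod_type]
  rw [integral_finsetSum _ fun i _ => hint i]
  simp only [lpnorm_rpow hq.ne', optProj]

lemma IsCausalStar.measurePreserving {π : Measure (PathD N d × PathD N d)}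
    (hπ : IsCausalStar μ π) : MeasurePreserving Prod.fst π μ :=
  ⟨measurable_fst, hπ.1⟩

variable [IsFiniteMeasure μ]

lemma memLp_optProj {e : ℝ≥0∞} (he : 1 ≤ e) (hD : MemLp (malliavin f) e μ) :
    MemLp (optProj μ f) e μ :=
  .of_eval fun i => .of_eval fun j =>
    (memLp_congr_ae (optProj_ae_eq_condExp (hD.integrable he) i j)).2
      (((hD.eval i).eval j).condExp he)

lemma integral_malliavin_mul_eq (hD : Integrable (malliavin f) μ) {i : Fin N} {j : Fin d}
    {φ : PathD N d → ℝ} (hφ : Measurable[Fn N d (i + 1)] φ)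
    (hint : Integrable (fun x => malliavin f x i j * φ x) μ) :
    ∫ x, malliavin f x i j * φ x ∂μ = ∫ x, optProj μ f x i j * φ x ∂μ := by
  rw [integral_mul_condExp (Fn_le N d (i + 1)) ((hD.eval i).eval j) hφ.stronglyMeasurable hint]
  exact integral_congr_ae ((optProj_ae_eq_condExp hD i j).symm.mul .rfl)

variable {π : Measure (PathD N d × PathD N d)} [IsFiniteMeasure π]

/-- Causality makes `Y_1, …, Y_{i+1}` blind to the part of `𝔻_{i+1} f(X)` beyond time `i + 1`. -/
lemma IsCausalStar.integral_malliavin_mul_snd_eq (hπ : IsCausalStar μ π)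
    (hD : Integrable (malliavin f) μ) {i : Fin N} {j : Fin d} {φ : PathD N d → ℝ}
    (hφ : Measurable[Fn N d (i + 1)] φ)
    (hDφ : Integrable (fun z => malliavin f z.1 i j * φ z.2) π)
    (hWφ : Integrable (fun z => optProj μ f z.1 i j * φ z.2) π) :
    ∫ z, malliavin f z.1 i j * φ z.2 ∂π = ∫ z, optProj μ f z.1 i j * φ z.2 ∂π := by
  have hDij : Integrable (fun x => malliavin f x i j) μ := (hD.eval i).eval j
  have hcond : (fun z : PathD N d × PathD N d => optProj μ f z.1 i j) =ᵐ[π]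
      π[fun z => malliavin f z.1 i j | (Fn N d (i + 1)).comap Prod.fst] :=
    (hπ.measurePreserving.quasiMeasurePreserving.ae_eq_comp (optProj_ae_eq_condExp hD i j)).trans
      (condExp_comp_measurePreserving hπ.measurePreserving (Fn_le N d _) hDij)
  have hDm : Measurable[Fn N d N] fun x => malliavin f x i j := by
    have := measurable_malliavin f
    rw [Fn_last]
    fun_prop
  have hcongr : (fun z => optProj μ f z.1 i j * φ z.2) =ᵐ[π] fun z =>
      (π[fun z => malliavin f z.1 i j | (Fn N d (i + 1)).comap Prod.fst]) z * φ z.2 :=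
    hcond.mul .rfl
  refine ((hπ.2 (i + 1)).integral_mul (g := fun z => malliavin f z.1 i j) (φ := fun z => φ z.2)
    (MeasurableSpace.comap_mono (Fn_mono i.isLt)) (comap_snd_Fn_le N d _) (comap_fst_Fn_le N d N)
    (hπ.measurePreserving.integrable_comp_of_integrable hDij)
    (hDm.comp (comap_measurable Prod.fst)).stronglyMeasurable
    (hφ.comp (comap_measurable Prod.snd)).stronglyMeasurable hDφ (hWφ.congr hcongr)).trans
    (integral_congr_ae hcongr).symm

end OptionalProjection

section UpperBound

variable {N d : ℕ} {p q : ℝ} {μ : Measure (PathD N d)} {f : PathD N d → ℝ}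
  {π : Measure (PathD N d × PathD N d)} [IsFiniteMeasure μ] [IsFiniteMeasure π]

lemma integrable_mul_inc {Ω : Type*} [MeasurableSpace Ω] {ρ : Measure Ω}
    (hpq : p.HolderConjugate q) {D g : Ω → PathD N d} (hD : MemLp D (ENNReal.ofReal q) ρ)
    (hg : MemLp g (ENNReal.ofReal p) ρ) (i : Fin N) (j : Fin d) :
    Integrable (fun ω => D ω i j * inc (g ω) i j) ρ :=
  integrable_mul_of_holderConjugate hpq.symm ((hD.eval i).eval j) (((memLp_inc hg).eval i).eval j)

lemma IsCausalStar.integral_malliavin_mul_inc_sub_eq (hπ : IsCausalStar μ π)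
    (hpq : p.HolderConjugate q) (hmom : MemLp (fun x => x) (ENNReal.ofReal p) μ)
    (hD : MemLp (malliavin f) (ENNReal.ofReal q) μ)
    (hsub : MemLp (fun z => z.2 - z.1) (ENNReal.ofReal p) π) (i : Fin N) (j : Fin d) :
    ∫ z, malliavin f z.1 i j * inc (z.2 - z.1) i j ∂π =
      ∫ z, optProj μ f z.1 i j * inc (z.2 - z.1) i j ∂π := by
  have hq : 1 ≤ ENNReal.ofReal q := ENNReal.one_le_ofReal.2 hpq.symm.lt.le
  have hfst := hπ.measurePreserving
  have hX : MemLp (fun z => z.1) (ENNReal.ofReal p) π := hmom.comp_measurePreserving hfst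
  have hY := memLp_snd_of_memLp_sub hfst hmom hsub
  have hW := memLp_optProj hq hD
  have hDπ : MemLp (fun z => malliavin f z.1) (ENNReal.ofReal q) π := hD.comp_measurePreserving hfst
  have hWπ : MemLp (fun z => optProj μ f z.1) (ENNReal.ofReal q) π := hW.comp_measurePreserving hfst
  have hinc := isAdaptedMap_inc.measurable_entry (N := N) (d := d) i j
  have hYeq := hπ.integral_malliavin_mul_snd_eq (hD.integrable hq) hinc
    (integrable_mul_inc hpq hDπ hY i j) (integrable_mul_inc hpq hWπ hY i j)
  have hXeq : ∫ z, malliavin f z.1 i j * inc z.1 i j ∂π =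
      ∫ z, optProj μ f z.1 i j * inc z.1 i j ∂π := by
    have hDinc := integrable_mul_inc hpq hD hmom i j
    rw [integral_comp_measurePreserving hfst hDinc.1,
      integral_comp_measurePreserving hfst (integrable_mul_inc hpq hW hmom i j).1,
      integral_malliavin_mul_eq (hD.integrable hq) hinc hDinc]
  simp only [inc_sub, Pi.sub_apply, mul_sub]
  rw [integral_sub (integrable_mul_inc hpq hDπ hY i j) (integrable_mul_inc hpq hDπ hX i j),
    integral_sub (integrable_mul_inc hpq hWπ hY i j) (integrable_mul_inc hpq hWπ hX i j),
    hXeq, hYeq]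

lemma IsCausalStar.integral_fderiv_sub_eq (hπ : IsCausalStar μ π)
    (hpq : p.HolderConjugate q) (hmom : MemLp (fun x => x) (ENNReal.ofReal p) μ)
    (hD : MemLp (malliavin f) (ENNReal.ofReal q) μ)
    (hsub : MemLp (fun z => z.2 - z.1) (ENNReal.ofReal p) π) :
    ∫ z, fderiv ℝ f z.1 (z.2 - z.1) ∂π =
      ∫ z, ∑ a : Fin N × Fin d, optProj μ f z.1 a.1 a.2 * inc (z.2 - z.1) a.1 a.2 ∂π := by
  have hq : 1 ≤ ENNReal.ofReal q := ENNReal.one_le_ofReal.2 hpq.symm.lt.le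
  have hfst := hπ.measurePreserving
  simp only [fderiv_apply_eq_sum_malliavin]
  rw [integral_finsetSum _ fun a _ =>
      integrable_mul_inc hpq (hD.comp_measurePreserving hfst) hsub a.1 a.2,
    integral_finsetSum _ fun a _ =>
      integrable_mul_inc hpq ((memLp_optProj hq hD).comp_measurePreserving hfst) hsub a.1 a.2]
  exact Finset.sum_congr rfl fun a _ =>
    hπ.integral_malliavin_mul_inc_sub_eq hpq hmom hD hsub a.1 a.2

lemma memLp_uncurry {Ω : Type*} [MeasurableSpace Ω] {ρ : Measure Ω} {e : ℝ≥0∞}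
    {g : Ω → PathD N d} (hg : MemLp g e ρ) :
    MemLp (fun ω (a : Fin N × Fin d) => g ω a.1 a.2) e ρ :=
  .of_eval fun a => (hg.eval a.1).eval a.2

lemma IsCausalStar.integral_fderiv_sub_le (hπ : IsCausalStar μ π)
    (hpq : p.HolderConjugate q) (hmom : MemLp (fun x => x) (ENNReal.ofReal p) μ)
    (hD : MemLp (malliavin f) (ENNReal.ofReal q) μ)
    (hcost : Integrable (fun z => cN p z.1 z.2) π) :
    ∫ z, fderiv ℝ f z.1 (z.2 - z.1) ∂π ≤ optionalNorm q μ f * costD p π ^ (1 / p) := by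
  have hfst := hπ.measurePreserving
  have hsub := memLp_sub_of_integrable_cN hpq.pos hcost
  have hW := memLp_optProj (ENNReal.one_le_ofReal.2 hpq.symm.lt.le) hD
  have henergy : Integrable (fun x => energy q (optProj μ f x)) μ :=
    integrable_sum_abs_rpow hpq.symm.pos (memLp_uncurry hW)
  rw [hπ.integral_fderiv_sub_eq hpq hmom hD hsub, optionalNorm_eq hpq.symm.pos hW, costD,
    ← integral_comp_measurePreserving hfst henergy.1]
  simp only [cN_eq_energy hpq.ne_zero]
  exact integral_sum_mul_le_Lp_mul_Lq hpq.symm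
    (memLp_uncurry (hW.comp_measurePreserving hfst)) (memLp_uncurry (memLp_inc hsub))

end UpperBound

section LowerBound

variable {N d : ℕ} {p q : ℝ} {μ : Measure (PathD N d)} {f : PathD N d → ℝ}

lemma mul_vmap (hq : 0 < q) (e : Fin d → ℝ) (j : Fin d) : e j * vmap q e j = |e j| ^ q := by
  rcases eq_or_ne (e j) 0 with h | h
  · simp [h, Real.zero_rpow hq.ne']
  · rw [vmap, ← mul_assoc, ← abs_mul_abs_self, ← pow_two, ← Real.rpow_natCast,
      ← Real.rpow_add (abs_pos.2 h)]
    norm_num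

lemma abs_vmap_rpow (hpq : p.HolderConjugate q) (e : Fin d → ℝ) (j : Fin d) :
    |vmap q e j| ^ p = |e j| ^ q := by
  rcases eq_or_ne (e j) 0 with h | h
  · simp [vmap, h, Real.zero_rpow hpq.ne_zero, Real.zero_rpow hpq.symm.ne_zero]
  · have habs : |vmap q e j| = |e j| ^ (q - 1) := by
      rw [vmap, abs_mul, abs_of_nonneg (Real.rpow_nonneg (abs_nonneg _) _),
        show q - 1 = 1 + (q - 2) by ring, Real.rpow_add (abs_pos.2 h), Real.rpow_one]
    rw [habs, ← Real.rpow_mul (abs_nonneg _), hpq.symm.sub_one_mul_conj]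

/-- The direction dual to the optional projection, for which Hölder's inequality is an equality. -/
noncomputable def dualProj (q : ℝ) (μ : Measure (PathD N d)) (f : PathD N d → ℝ)
    (x : PathD N d) : PathD N d :=
  fun i => vmap q (optProj μ f x i)

lemma isAdaptedMap_smul_dualProj (c q : ℝ) (μ : Measure (PathD N d)) (f : PathD N d → ℝ) :
    IsAdaptedMap fun x => c • dualProj q μ f x := by
  intro i
  have hvmap : Measurable fun e : Fin d → ℝ => c • vmap q e := by
    unfold vmap
    fun_prop
  exact hvmap.comp (isAdaptedMap_optProj μ f i)

lemma energy_smul_dualProj (hpq : p.HolderConjugate q) {c : ℝ} (hc : 0 ≤ c) (x : PathD N d) :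
    energy p (c • dualProj q μ f x) = c ^ p * energy q (optProj μ f x) := by
  simp only [energy, Pi.smul_apply, smul_eq_mul, abs_mul, dualProj, abs_of_nonneg hc,
    Real.mul_rpow hc (abs_nonneg _), abs_vmap_rpow hpq, Finset.mul_sum]

lemma sum_optProj_mul_smul_dualProj (hq : 0 < q) (c : ℝ) (x : PathD N d) :
    ∑ a : Fin N × Fin d, optProj μ f x a.1 a.2 * (c • dualProj q μ f x) a.1 a.2 =
      c * energy q (optProj μ f x) := by
  simp only [energy, Pi.smul_apply, smul_eq_mul, dualProj, mul_left_comm, mul_vmap hq,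
    Finset.mul_sum]

/-- The law of `(X, X + Δ⁻¹ k(X))` under `μ`, the coupling that shifts the increments by `k`. -/
noncomputable def shiftCoupling (μ : Measure (PathD N d)) (k : PathD N d → PathD N d) :
    Measure (PathD N d × PathD N d) :=
  μ.map fun x => (x, x + DeltaInv (k x))

section ShiftCoupling

variable {k : PathD N d → PathD N d}

lemma IsAdaptedMap.measurable_prodMk_add_DeltaInv (hk : IsAdaptedMap k) :
    Measurable fun x => (x, x + DeltaInv (k x)) :=
  measurable_id.prodMk hk.add_DeltaInv.measurable

lemma IsAdaptedMap.isCausalStar_shiftCoupling [IsFiniteMeasure μ] (hk : IsAdaptedMap k) :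
    IsCausalStar μ (shiftCoupling μ k) :=
  hk.add_DeltaInv.isCausalStar_map

lemma cN_add_DeltaInv (hp : p ≠ 0) (x y : PathD N d) : cN p x (x + DeltaInv y) = energy p y := by
  rw [cN_eq_energy hp, add_sub_cancel_left, inc_DeltaInv]

lemma IsAdaptedMap.integrable_cN_shiftCoupling (hp : p ≠ 0) (hk : IsAdaptedMap k)
    (hint : Integrable (fun x => energy p (k x)) μ) :
    Integrable (fun z => cN p z.1 z.2) (shiftCoupling μ k) := by
  rw [shiftCoupling, integrable_map_measure (measurable_cN hp).aestronglyMeasurable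
    hk.measurable_prodMk_add_DeltaInv.aemeasurable]
  simpa only [Function.comp_def, cN_add_DeltaInv hp] using hint

lemma IsAdaptedMap.costD_shiftCoupling (hp : p ≠ 0) (hk : IsAdaptedMap k) :
    costD p (shiftCoupling μ k) = ∫ x, energy p (k x) ∂μ := by
  rw [costD, shiftCoupling, integral_map hk.measurable_prodMk_add_DeltaInv.aemeasurable
    (measurable_cN hp).aestronglyMeasurable]
  simp only [cN_add_DeltaInv hp]

lemma IsAdaptedMap.integral_fderiv_sub_shiftCoupling [IsFiniteMeasure μ] (hk : IsAdaptedMap k)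
    (hpq : p.HolderConjugate q) (hmom : MemLp (fun x => x) (ENNReal.ofReal p) μ)
    (hD : MemLp (malliavin f) (ENNReal.ofReal q) μ)
    (hint : Integrable (fun x => energy p (k x)) μ) :
    ∫ z, fderiv ℝ f z.1 (z.2 - z.1) ∂shiftCoupling μ k =
      ∫ x, ∑ a : Fin N × Fin d, optProj μ f x a.1 a.2 * k x a.1 a.2 ∂μ := by
  have hgraph := hk.measurable_prodMk_add_DeltaInv
  have hcost := hk.integrable_cN_shiftCoupling hpq.ne_zero hint
  have : IsFiniteMeasure (shiftCoupling μ k) := Measure.isFiniteMeasure_map μ _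
  have hW : Measurable (optProj μ f) := (isAdaptedMap_optProj μ f).measurable
  have hinc : Measurable (inc : PathD N d → PathD N d) := measurable_inc
  rw [hk.isCausalStar_shiftCoupling.integral_fderiv_sub_eq hpq hmom hD
    (memLp_sub_of_integrable_cN hpq.pos hcost), shiftCoupling,
    integral_map hgraph.aemeasurable (Measurable.aestronglyMeasurable (by fun_prop))]
  simp only [add_sub_cancel_left, inc_DeltaInv]

end ShiftCoupling

lemma optionalNorm_nonneg (q : ℝ) (μ : Measure (PathD N d)) (f : PathD N d → ℝ) :
    0 ≤ optionalNorm q μ f :=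
  Real.rpow_nonneg (Finset.sum_nonneg fun _ _ => integral_nonneg fun _ =>
    Real.rpow_nonneg (Real.rpow_nonneg (Finset.sum_nonneg fun _ _ => by positivity) _) _) _

lemma optionalNorm_rpow (hq : 0 < q) (hW : MemLp (optProj μ f) (ENNReal.ofReal q) μ) :
    optionalNorm q μ f ^ q = ∫ x, energy q (optProj μ f x) ∂μ := by
  rw [optionalNorm_eq hq hW, one_div,
    Real.rpow_inv_rpow (integral_nonneg fun _ => energy_nonneg _ _) hq.ne']

lemma exists_isCausalStar_costD_rpow_eq [IsProbabilityMeasure μ] (hpq : p.HolderConjugate q)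
    (hmom : MemLp (fun x => x) (ENNReal.ofReal p) μ)
    (hD : MemLp (malliavin f) (ENNReal.ofReal q) μ) {t : ℝ} (ht : 0 ≤ t)
    (htv : t = 0 ∨ optionalNorm q μ f ≠ 0) :
    ∃ π, IsProbabilityMeasure π ∧ IsCausalStar μ π ∧ Integrable (fun z => cN p z.1 z.2) π ∧
      costD p π ^ (1 / p) = t ∧
      ∫ z, fderiv ℝ f z.1 (z.2 - z.1) ∂π = optionalNorm q μ f * t := by
  have hq := hpq.symm.pos
  have hW := memLp_optProj (ENNReal.one_le_ofReal.2 hpq.symm.lt.le) hD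
  set v := optionalNorm q μ f with hv
  have hv0 : 0 ≤ v := optionalNorm_nonneg q μ f
  -- With this factor the shift by `c • dualProj` has cost `t ^ p`, since `(1 - q) * p + q = 0`.
  set c := t * v ^ (1 - q) with hc
  have hc0 : 0 ≤ c := by positivity
  have hk := isAdaptedMap_smul_dualProj c q μ f
  have hint : Integrable (fun x => energy p (c • dualProj q μ f x)) μ := by
    simp only [energy_smul_dualProj hpq hc0]
    exact (integrable_sum_abs_rpow hq (memLp_uncurry hW)).const_mul _
  have hcost : costD p (shiftCoupling μ fun x => c • dualProj q μ f x) = t ^ p := by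
    simp only [hk.costD_shiftCoupling hpq.ne_zero, energy_smul_dualProj hpq hc0,
      integral_const_mul, ← optionalNorm_rpow hq hW, ← hv]
    rcases htv with rfl | hv'
    · simp [hc, Real.zero_rpow hpq.ne_zero]
    · rw [hc, Real.mul_rpow ht (by positivity), ← Real.rpow_mul hv0, mul_assoc,
        ← Real.rpow_add (hv0.lt_of_ne' hv'),
        show (1 - q) * p + q = 0 by linear_combination -hpq.symm.sub_one_mul_conj,
        Real.rpow_zero, mul_one]
  refine ⟨_, Measure.isProbabilityMeasure_map hk.measurable_prodMk_add_DeltaInv.aemeasurable,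
    hk.isCausalStar_shiftCoupling, hk.integrable_cN_shiftCoupling hpq.ne_zero hint, ?_, ?_⟩
  · rw [← shiftCoupling, hcost, one_div, Real.rpow_rpow_inv ht hpq.ne_zero]
  · rw [← shiftCoupling, hk.integral_fderiv_sub_shiftCoupling hpq hmom hD hint]
    simp only [sum_optProj_mul_smul_dualProj hq, integral_const_mul, ← optionalNorm_rpow hq hW,
      ← hv]
    rcases htv with rfl | hv'
    · simp [hc]
    · rw [hc, mul_assoc, ← Real.rpow_add (hv0.lt_of_ne' hv'), sub_add_cancel, Real.rpow_one,
        mul_comm]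

end LowerBound

section PenalizedSupremum

lemma coe_sub_coe_ennreal_le_coe_iff (x b : ℝ) (l : ℝ≥0∞) :
    (x : EReal) - (l : EReal) ≤ (b : EReal) ↔ ENNReal.ofReal (x - b) ≤ l := by
  induction l with
  | top => simp
  | coe l =>
    rw [ENNReal.ofReal_le_iff_le_toReal ENNReal.coe_ne_top, ENNReal.coe_toReal, sub_le_comm,
      ← EReal.coe_le_coe_iff]
    rfl

lemma one_div_mul_sub_le_coe_iff {δ : ℝ} (hδ : 0 < δ) (V : EReal) (a b : ℝ) :
    ((1 / δ : ℝ) : EReal) * (V - (a : EReal)) ≤ (b : EReal) ↔ V ≤ ((a + δ * b : ℝ) : EReal) := by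
  induction V with
  | bot => simp [EReal.coe_mul_bot_of_pos (inv_pos.2 hδ)]
  | top =>
    rw [EReal.top_sub_coe, EReal.coe_mul_top_of_pos (one_div_pos.2 hδ)]
    simp only [top_le_iff, EReal.coe_ne_top]
  | coe V =>
    norm_cast
    rw [one_div, inv_mul_le_iff₀ hδ, sub_le_iff_le_add']

lemma mul_rpow_eq_mul_rpow_sub_one_mul {δ u : ℝ} (hδ : 0 < δ) (hu : 0 ≤ u) (p : ℝ) :
    (δ * u) ^ p = δ * (δ ^ (p - 1) * u ^ p) := by
  rw [Real.mul_rpow hδ.le hu, Real.rpow_sub_one hδ.ne']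
  field_simp

lemma eventually_mul_rpow_le {r : ℝ} (hr : 0 < r) (M : ℝ) {η : ℝ} (hη : 0 < η) :
    ∀ᶠ δ : ℝ in 𝓝[>] 0, M * δ ^ r ≤ η := by
  have h : Tendsto (fun δ : ℝ => M * δ ^ r) (𝓝 0) (𝓝 0) := by
    simpa [Real.zero_rpow hr.ne'] using
      ((Real.continuousAt_rpow_const 0 r (Or.inr hr.le)).tendsto).const_mul M
  exact (h.mono_left nhdsWithin_le_nhds).eventually_le_const hη

variable {L : ℝ → ℝ≥0∞} {p v b : ℝ}

lemma Lconj_le_coe_iff :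
    Lconj L v ≤ (b : EReal) ↔ ∀ u, 0 ≤ u → ENNReal.ofReal (u * v - b) ≤ L u := by
  simp only [Lconj, iSup_le_iff, coe_sub_coe_ennreal_le_coe_iff, Subtype.forall]

lemma eventually_ofReal_le_of_tendsto_div_rpow (hp : 1 ≤ p)
    (hgrowth : Tendsto (fun u : ℝ => L u / ENNReal.ofReal (u ^ p)) atTop (𝓝 ⊤)) (a M b : ℝ) :
    ∀ᶠ u in atTop, ENNReal.ofReal (a * u + M * u ^ p - b) ≤ L u := by
  filter_upwards [hgrowth.eventually_const_lt
    (ENNReal.ofReal_lt_top (r := |a| + M + |b|)), eventually_ge_atTop 1] with u hu hu1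
  have hup : u ≤ u ^ p := Real.self_le_rpow_of_one_le hu1 hp
  have hpos : 0 < ENNReal.ofReal (u ^ p) := ENNReal.ofReal_pos.2 (by positivity)
  refine le_trans ?_ ((ENNReal.lt_div_iff_mul_lt (Or.inl hpos.ne')
    (Or.inl ENNReal.ofReal_ne_top)).1 hu).le
  rw [← ENNReal.ofReal_mul' (by positivity)]
  refine ENNReal.ofReal_le_ofReal ?_
  calc a * u + M * u ^ p - b ≤ |a| * u ^ p + M * u ^ p + |b| * u ^ p := by
        have ha : a * u ≤ |a| * u ^ p := by gcongr; exact le_abs_self a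
        have hb : -b ≤ |b| * u ^ p :=
          (neg_le_abs b).trans (le_mul_of_one_le_right (abs_nonneg b) (hu1.trans hup))
        linarith
    _ = (|a| + M + |b|) * u ^ p := by ring

/-- Superlinear growth leaves a compact range of `u`, on which a small `η` costs little. -/
lemma exists_forall_ofReal_le_of_Lconj_lt (hp : 1 ≤ p)
    (hgrowth : Tendsto (fun u : ℝ => L u / ENNReal.ofReal (u ^ p)) atTop (𝓝 ⊤))
    (hb : Lconj L v < b) :
    ∃ η > 0, ∀ u, 0 ≤ u → ENNReal.ofReal ((v + η) * u + η * u ^ p - b) ≤ L u := by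
  obtain ⟨b₀, hvb₀, hb₀⟩ := EReal.lt_iff_exists_real_btwn.1 hb
  have hb₀b : b₀ < b := EReal.coe_lt_coe_iff.1 hb₀
  obtain ⟨U, hU, hU0⟩ := ((eventually_forall_ge_atTop.2
    (eventually_ofReal_le_of_tendsto_div_rpow hp hgrowth (v + 1) 1 b)).and
    (eventually_ge_atTop 0)).exists
  set η := min 1 ((b - b₀) / (U + U ^ p + 1))
  have hη1 : η ≤ 1 := min_le_left _ _
  have hηU : η * (U + U ^ p + 1) ≤ b - b₀ := (le_div_iff₀ (by positivity)).1 (min_le_right _ _)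
  have hη0 : 0 < η := lt_min one_pos (div_pos (sub_pos.2 hb₀b) (by positivity))
  refine ⟨η, hη0, fun u hu => ?_⟩
  rcases le_total U u with hUu | huU
  · refine le_trans (ENNReal.ofReal_le_ofReal ?_) (hU u hUu)
    gcongr
  · refine le_trans (ENNReal.ofReal_le_ofReal ?_) (Lconj_le_coe_iff.1 hvb₀.le u hu)
    have hpow : u ^ p ≤ U ^ p := Real.rpow_le_rpow hu huU (zero_le_one.trans hp)
    have := mul_le_mul_of_nonneg_left (add_le_add huU hpow) hη0.le
    linarith

lemma exists_lt_ofReal_of_lt_Lconj (hmin : ∀ u, 0 ≤ u → L 0 ≤ L u) (hb : b < Lconj L v) :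
    ∃ u, 0 ≤ u ∧ (u = 0 ∨ v ≠ 0) ∧ ∃ η > 0, L u < ENNReal.ofReal ((v - η) * u - η * u ^ p - b) := by
  obtain ⟨w, hw, hLw⟩ : ∃ w, 0 ≤ w ∧ L w < ENNReal.ofReal (w * v - b) := by
    simpa only [Lconj_le_coe_iff, not_forall, not_le, exists_prop] using not_le.2 hb
  obtain ⟨u, hu, huv, hLu⟩ : ∃ u, 0 ≤ u ∧ (u = 0 ∨ v ≠ 0) ∧ L u < ENNReal.ofReal (u * v - b) := by
    rcases eq_or_ne v 0 with rfl | hv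
    · exact ⟨0, le_rfl, .inl rfl, (hmin w hw).trans_lt (by simpa using hLw)⟩
    · exact ⟨w, hw, .inr hv, hLw⟩
  have hcont : Continuous fun η : ℝ => ENNReal.ofReal ((v - η) * u - η * u ^ p - b) :=
    ENNReal.continuous_ofReal.comp (by fun_prop)
  have hlim : ∀ᶠ η in 𝓝[>] (0 : ℝ), L u < ENNReal.ofReal ((v - η) * u - η * u ^ p - b) :=
    nhdsWithin_le_nhds (hcont.continuousAt.eventually_const_lt (by simpa [mul_comm] using hLu))
  obtain ⟨η, hLη, hη⟩ := (hlim.and self_mem_nhdsWithin).exists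
  exact ⟨u, hu, huv, η, hη, hLη⟩

variable {ι : Type*} {F ε : ι → ℝ} {F₀ : ℝ}

/-- The difference quotient at `0` of `δ ↦ sup_i {F i - δ L(ε i / δ)}`, with value `F₀` at `0`. -/
noncomputable def penalizedQuotient (L : ℝ → ℝ≥0∞) (F ε : ι → ℝ) (F₀ δ : ℝ) : EReal :=
  ((1 / δ : ℝ) : EReal) *
    ((⨆ i, (F i : EReal) - ((ENNReal.ofReal δ * L (ε i / δ) : ℝ≥0∞) : EReal)) - (F₀ : EReal))

lemma penalizedQuotient_le_coe_iff {δ : ℝ} (hδ : 0 < δ) :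
    penalizedQuotient L F ε F₀ δ ≤ (b : EReal) ↔
      ∀ i, ENNReal.ofReal ((F i - F₀) / δ - b) ≤ L (ε i / δ) := by
  have hscale : ∀ i, F i - (F₀ + δ * b) = δ * ((F i - F₀) / δ - b) := fun i => by
    field_simp
    ring
  simp only [penalizedQuotient, one_div_mul_sub_le_coe_iff hδ, iSup_le_iff,
    coe_sub_coe_ennreal_le_coe_iff, hscale, ENNReal.ofReal_mul hδ.le]
  simp only [ENNReal.mul_le_mul_iff_right (ENNReal.ofReal_pos.2 hδ).ne' ENNReal.ofReal_ne_top]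

lemma eventually_penalizedQuotient_le (hp : 1 < p)
    (hgrowth : Tendsto (fun u : ℝ => L u / ENNReal.ofReal (u ^ p)) atTop (𝓝 ⊤))
    (hε : ∀ i, 0 ≤ ε i)
    (hupper : ∀ η > 0, ∃ M, ∀ i, F i - F₀ ≤ (v + η) * ε i + M * ε i ^ p) (hb : Lconj L v < b) :
    ∀ᶠ δ in 𝓝[>] 0, penalizedQuotient L F ε F₀ δ ≤ (b : EReal) := by
  obtain ⟨η, hη, hL⟩ := exists_forall_ofReal_le_of_Lconj_lt hp.le hgrowth hb
  obtain ⟨M, hM⟩ := hupper η hη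
  filter_upwards [self_mem_nhdsWithin, eventually_mul_rpow_le (sub_pos.2 hp) M hη] with δ hδ hMδ
  refine (penalizedQuotient_le_coe_iff hδ).2 fun i => ?_
  obtain ⟨u, hεu⟩ : ∃ u, ε i = δ * u := ⟨ε i / δ, (mul_div_cancel₀ _ (ne_of_gt hδ)).symm⟩
  have hu : 0 ≤ u := nonneg_of_mul_nonneg_right (hεu ▸ hε i) hδ
  rw [hεu, mul_div_cancel_left₀ u (ne_of_gt hδ)]
  refine le_trans (ENNReal.ofReal_le_ofReal (sub_le_sub_right ?_ b)) (hL u hu)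
  calc (F i - F₀) / δ ≤ (v + η) * u + M * δ ^ (p - 1) * u ^ p := by
        rw [div_le_iff₀ hδ]
        refine (hM i).trans_eq ?_
        rw [hεu, mul_rpow_eq_mul_rpow_sub_one_mul hδ hu]
        ring
    _ ≤ (v + η) * u + η * u ^ p := by gcongr

lemma eventually_lt_penalizedQuotient (hp : 1 < p) (hmin : ∀ u, 0 ≤ u → L 0 ≤ L u)
    (hlower : ∀ η > 0, ∃ M, ∀ t, 0 ≤ t → (t = 0 ∨ v ≠ 0) →
      ∃ i, ε i = t ∧ (v - η) * t - M * t ^ p ≤ F i - F₀) (hb : b < Lconj L v) :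
    ∀ᶠ δ in 𝓝[>] 0, (b : EReal) < penalizedQuotient L F ε F₀ δ := by
  obtain ⟨u, hu, huv, η, hη, hL⟩ := exists_lt_ofReal_of_lt_Lconj (p := p) hmin hb
  obtain ⟨M, hM⟩ := hlower η hη
  filter_upwards [self_mem_nhdsWithin, eventually_mul_rpow_le (sub_pos.2 hp) M hη] with δ hδ hMδ
  obtain ⟨i, hεi, hFi⟩ := hM (δ * u) (mul_nonneg (le_of_lt hδ) hu)
    (huv.imp_left fun hu0 => by rw [hu0, mul_zero])
  refine not_le.1 fun hle => not_le.2 hL ?_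
  have hLi := (penalizedQuotient_le_coe_iff hδ).1 hle i
  rw [hεi, mul_div_cancel_left₀ u (ne_of_gt hδ)] at hLi
  refine le_trans (ENNReal.ofReal_le_ofReal (sub_le_sub_right ?_ b)) hLi
  calc (v - η) * u - η * u ^ p ≤ (v - η) * u - M * δ ^ (p - 1) * u ^ p := by gcongr
    _ ≤ (F i - F₀) / δ := by
        rw [le_div_iff₀ hδ]
        refine le_trans (le_of_eq ?_) hFi
        rw [mul_rpow_eq_mul_rpow_sub_one_mul hδ hu]
        ring

lemma tendsto_penalizedQuotient (hp : 1 < p) (hmin : ∀ u, 0 ≤ u → L 0 ≤ L u)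
    (hgrowth : Tendsto (fun u : ℝ => L u / ENNReal.ofReal (u ^ p)) atTop (𝓝 ⊤))
    (hε : ∀ i, 0 ≤ ε i)
    (hupper : ∀ η > 0, ∃ M, ∀ i, F i - F₀ ≤ (v + η) * ε i + M * ε i ^ p)
    (hlower : ∀ η > 0, ∃ M, ∀ t, 0 ≤ t → (t = 0 ∨ v ≠ 0) →
      ∃ i, ε i = t ∧ (v - η) * t - M * t ^ p ≤ F i - F₀) :
    Tendsto (penalizedQuotient L F ε F₀) (𝓝[>] 0) (𝓝 (Lconj L v)) := by
  refine tendsto_order.2 ⟨fun c hc => ?_, fun c hc => ?_⟩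
  · obtain ⟨b, hcb, hb⟩ := EReal.lt_iff_exists_real_btwn.1 hc
    exact (eventually_lt_penalizedQuotient hp hmin hlower hb).mono fun δ => hcb.trans
  · obtain ⟨b, hb, hbc⟩ := EReal.lt_iff_exists_real_btwn.1 hc
    exact (eventually_penalizedQuotient_le hp hgrowth hε hupper hb).mono fun δ hδ =>
      hδ.trans_lt hbc

end PenalizedSupremum

section Sensitivity

variable {N d : ℕ} {p q C : ℝ} {μ : Measure (PathD N d)} {f : PathD N d → ℝ}

lemma costD_nonneg (hp : p ≠ 0) (π : Measure (PathD N d × PathD N d)) : 0 ≤ costD p π :=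
  integral_nonneg fun z => (cN_eq_energy hp z.1 z.2).symm ▸ energy_nonneg p _

lemma integral_norm_sub_rpow_le_costD (hp : 0 < p) {π : Measure (PathD N d × PathD N d)}
    (hcost : Integrable (fun z => cN p z.1 z.2) π) :
    ∫ z, ‖z.2 - z.1‖ ^ p ∂π ≤ (N : ℝ) ^ p * costD p π := by
  rw [costD, ← integral_const_mul]
  exact integral_mono (integrable_norm_rpow_of_memLp hp (memLp_sub_of_integrable_cN hp hcost))
    (hcost.const_mul _) fun z => norm_rpow_le_cN hp z.1 z.2

lemma exists_expansion_costD (hpq : p.HolderConjugate q) [IsFiniteMeasure μ]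
    (hmom : MemLp (fun x => x) (ENNReal.ofReal p) μ) (hf : Differentiable ℝ f)
    (hA : ∀ x, ‖fderiv ℝ f x‖ ≤ C * (1 + ‖x‖ ^ (p - 1))) {η : ℝ} (hη : 0 < η) :
    ∃ M, ∀ π : Measure (PathD N d × PathD N d), MeasurePreserving Prod.fst π μ →
      Integrable (fun z => cN p z.1 z.2) π →
      |∫ z, f z.2 ∂π - ∫ x, f x ∂μ - ∫ z, fderiv ℝ f z.1 (z.2 - z.1) ∂π| ≤
        η * costD p π ^ (1 / p) + M * (costD p π ^ (1 / p)) ^ p := by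
  have hp := hpq.pos
  obtain ⟨M, hM, hexp⟩ := exists_coupling_expansion hpq hmom hf hA (η := η / (N + 1))
    (by positivity)
  refine ⟨M * (N : ℝ) ^ p, fun π hπ hcost => ?_⟩
  have hcost0 := costD_nonneg hp.ne' π
  have hroot0 : 0 ≤ costD p π ^ (1 / p) := by positivity
  have hle := integral_norm_sub_rpow_le_costD hp hcost
  have hroot : (∫ z, ‖z.2 - z.1‖ ^ p ∂π) ^ (1 / p) ≤ N * costD p π ^ (1 / p) := by
    refine (Real.rpow_le_rpow (integral_nonneg fun _ => by positivity) hle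
      hpq.one_div_nonneg).trans_eq ?_
    rw [Real.mul_rpow (by positivity) hcost0, one_div,
      Real.rpow_rpow_inv (Nat.cast_nonneg N) hp.ne']
  calc |∫ z, f z.2 ∂π - ∫ x, f x ∂μ - ∫ z, fderiv ℝ f z.1 (z.2 - z.1) ∂π|
      ≤ η / (N + 1) * (∫ z, ‖z.2 - z.1‖ ^ p ∂π) ^ (1 / p) + M * ∫ z, ‖z.2 - z.1‖ ^ p ∂π :=
        hexp π hπ (memLp_sub_of_integrable_cN hp hcost)
    _ ≤ η / (N + 1) * ((N + 1) * costD p π ^ (1 / p)) + M * ((N : ℝ) ^ p * costD p π) := by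
        gcongr
        linarith
    _ = η * costD p π ^ (1 / p) + M * (N : ℝ) ^ p * (costD p π ^ (1 / p)) ^ p := by
        rw [one_div, Real.rpow_inv_rpow hcost0 hp.ne']
        field_simp

theorem statement_8_general (hpq : p.HolderConjugate q) {L : ℝ → ℝ≥0∞}
    (hmin : ∀ u, 0 ≤ u → L 0 ≤ L u)
    (hgrowth : Tendsto (fun u : ℝ => L u / ENNReal.ofReal (u ^ p)) atTop (𝓝 ⊤))
    [IsProbabilityMeasure μ] (hmom : Integrable (fun x : PathD N d => ‖x‖ ^ p) μ)
    (hf : Differentiable ℝ f)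
    (hgrow : ∀ n : ℕ, ∀ x : PathD N d, lpnorm q (Dn f n x) ≤ C * (1 + ‖x‖ ^ (p - 1))) :
    Tendsto (fun δ : ℝ =>
        ((1 / δ : ℝ) : EReal) * (VD p L μ f δ - ((∫ x, f x ∂μ : ℝ) : EReal)))
      (𝓝[>] 0) (𝓝 (Lconj L (optionalNorm q μ f))) := by
  have hA := norm_fderiv_le_of_lpnorm_Dn_le hpq.symm.pos hgrow
  have hmemLp : MemLp (fun x : PathD N d => x) (ENNReal.ofReal p) μ :=
    (integrable_norm_rpow_iff aestronglyMeasurable_id (ENNReal.ofReal_pos.2 hpq.pos).ne'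
      ENNReal.ofReal_ne_top).1 (by rwa [ENNReal.toReal_ofReal hpq.nonneg])
  have hD := memLp_malliavin hpq hmemLp hA
  refine tendsto_penalizedQuotient (F := fun π => ∫ z, f z.2 ∂π.1)
    (ε := fun π : {π : Measure (PathD N d × PathD N d) // IsProbabilityMeasure π ∧
      IsCausalStar μ π ∧ Integrable (fun z => cN p z.1 z.2) π} => costD p π.1 ^ (1 / p))
    hpq.lt hmin hgrowth (fun π => Real.rpow_nonneg (costD_nonneg hpq.ne_zero π.1) _)
    (fun η hη => ?_) (fun η hη => ?_)
  · obtain ⟨M, hexp⟩ := exists_expansion_costD hpq hmemLp hf hA hη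
    refine ⟨M, fun ⟨π, _, hπ, hcost⟩ => ?_⟩
    have hub := hπ.integral_fderiv_sub_le hpq hmemLp hD hcost
    linarith [(abs_le.1 (hexp π hπ.measurePreserving hcost)).2]
  · obtain ⟨M, hexp⟩ := exists_expansion_costD hpq hmemLp hf hA hη
    refine ⟨M, fun t ht htv => ?_⟩
    obtain ⟨π, hprob, hπ, hcost, rfl, hlin⟩ :=
      exists_isCausalStar_costD_rpow_eq hpq hmemLp hD ht htv
    refine ⟨⟨π, hprob, hπ, hcost⟩, rfl, ?_⟩
    linarith [(abs_le.1 (hexp π hπ.measurePreserving hcost)).1]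

end Sensitivity

end

/-- Discrete-time sensitivity of causal-Wasserstein DRO:
`lim_{δ→0+} (V(δ) − V(0))/δ = L*(‖ᵒ𝔻f‖_{L^q(μ)})`, where
`‖ᵒ𝔻f‖_{L^q(μ)} = (Σ_{n=1}^N E_μ[|E_μ[𝔻_n f(X)|F_n]|_*^q])^{1/q}`. -/
theorem statement_8 {N d : ℕ} (p q : ℝ) (hp : 1 < p) (hq : q = p / (p - 1))
    (L : ℝ → ℝ≥0∞) (hL : PenaltyAssumptions p L)
    (μ : Measure (PathD N d)) [IsProbabilityMeasure μ]
    (hmom : Integrable (fun x : PathD N d => ‖x‖ ^ p) μ)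
    (f : PathD N d → ℝ) (hf : ContDiff ℝ 1 f)
    (C : ℝ) (hgrow : ∀ n : ℕ, ∀ x : PathD N d,
      lpnorm q (Dn f n x) ≤ C * (1 + ‖x‖ ^ (p - 1))) :
    Tendsto (fun δ : ℝ =>
        (((1 / δ : ℝ)) : EReal) * (VD p L μ f δ - ((∫ x, f x ∂μ : ℝ) : EReal)))
      (nhdsWithin 0 (Set.Ioi 0))
      (nhds (Lconj L (optionalNorm q μ f))) :=
  statement_8_general (hq ▸ Real.HolderConjugate.conjExponent hp)
    (fun _ hu => hL.mono self_mem_Ici hu hu) hL.growth hmom (hf.differentiable one_ne_zero) hgrow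
end
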